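/- arXiv:math/0204106 — 2 statements merged into one kernel-verified Lean document; each statement's English description precedes it below -/
import Mathlib

section
/- Let K be a closed curve in ℝ^d and let K* be obtained from K by replacing a subarc Γ of K with the straight line segment S joining its endpoints. Then for every hyperplane P, the number of intersections of K* with P (counted by components with the stated conventions) is at most the number of intersections of K with P; consequently hₙ(K*) ⊆ hₙ(K) for all n. -/
open Set
open scoped Classical

noncomputable section

variable {E : Type*} [NormedAddCommGroup E] [NormedSpace ℝ E]

/-- The connected components of the periodic level set `Z ⊆ ℝ`, with one
canonical representative chosen per period. -/
def circComps (Z : Set ℝ) : Set (Set ℝ) :=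
  {S | ∃ t ∈ Z, S = connectedComponentIn Z t ∧ sInf S ∈ Ico (0 : ℝ) 1}

/-- The arc of the curve just after the component `S` lies above the level `c`. -/
def AboveAfter (g : ℝ → ℝ) (c : ℝ) (S : Set ℝ) : Prop :=
  ∃ ε > 0, ∀ s ∈ Ioo (sSup S) (sSup S + ε), c < g s

/-- The arc of the curve just before the component `S` lies above the level `c`. -/
def AboveBefore (g : ℝ → ℝ) (c : ℝ) (S : Set ℝ) : Prop :=
  ∃ ε > 0, ∀ s ∈ Ioo (sInf S - ε) (sInf S), c < g s

/-- A glancing intersection: the arcs just before and just after the component `S`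
lie on the same side of the level `c`; such components are counted twice. -/
def IsGlancing (g : ℝ → ℝ) (c : ℝ) (S : Set ℝ) : Prop :=
  AboveBefore g c S ↔ AboveAfter g c S

/-- Number of intersections of the closed curve `K` (a `1`-periodic map `ℝ → E`)
with the hyperplane `{x | f x = c}`: components of the preimage are counted once,
glancing components twice, and a curve contained in the hyperplane counts as two
intersections. (Infinitely many components give an infinite count.) -/
def cutCount (K : ℝ → E) (f : E →L[ℝ] ℝ) (c : ℝ) : Cardinal :=
  if {t : ℝ | f (K t) = c} = univ then 2
  else Cardinal.mk (circComps {t : ℝ | f (K t) = c})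
    + Cardinal.mk ({S ∈ circComps {t : ℝ | f (K t) = c} | IsGlancing (fun t => f (K t)) c S})

/-- `K` cuts the hyperplane `{x | f x = c}` at least `m` times. -/
def CutsAtLeast (K : ℝ → E) (f : E →L[ℝ] ℝ) (c : ℝ) (m : ℕ) : Prop :=
  (m : Cardinal) ≤ cutCount K f c

/-- The `n`-th hull of the closed curve `K`: points `p` such that every hyperplane
through `p` is cut at least `2n` times by `K`. -/
def hull (K : ℝ → E) (n : ℕ) : Set E :=
  {p | ∀ f : E →L[ℝ] ℝ, f ≠ 0 → CutsAtLeast K f (f p) (2 * n)}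

/-!
Compose both curves with the functional defining the hyperplane. Intersections disjoint from the
replaced arc `[a, b]` are the same, with the same sides, for both functions. On the arc the new
function is monotone, so at most one of its intersections `S` meets the arc, and then by the
intermediate value theorem at least one of the old ones does. It remains to see that `S` is not
counted twice against a single old intersection `T` counted once: if `T` is the only old
intersection meeting the arc, then `S` and `T` both contain all points of the arc in the
hyperplane, so the sides on which the curves leave them depend only on the common part of the two
curves, and `S` is glancing if and only if `T` is.
-/

open Filter Topology
open scoped Cardinal

section WeightedCard

variable {α : Type*} {A A' : Set α} {P P' : α → Prop}

/-- The cardinality of `A`, with the elements satisfying `P` counted twice. -/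
def weightedCard (A : Set α) (P : α → Prop) : Cardinal :=
  #A + #{x ∈ A | P x}

lemma weightedCard_mono (hA : A ⊆ A') (hP : ∀ x ∈ A, P x → P' x) :
    weightedCard A P ≤ weightedCard A' P' :=
  add_le_add (Cardinal.mk_le_mk_of_subset hA)
    (Cardinal.mk_le_mk_of_subset fun x hx => ⟨hA hx.1, hP x hx.1 hx.2⟩)

lemma weightedCard_inter_add_diff (A B : Set α) (P : α → Prop) :
    weightedCard (A ∩ B) P + weightedCard (A \ B) P = weightedCard A P := by
  have card_split : ∀ s : Set α, #(s ∩ B : Set α) + #(s \ B : Set α) = #s := fun s => by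
    rw [← Cardinal.mk_union_of_disjoint disjoint_sdiff_inter.symm, inter_union_sdiff]
  have sep_inter : {x ∈ A ∩ B | P x} = {x ∈ A | P x} ∩ B := by
    ext; exact and_right_comm
  have sep_diff : {x ∈ A \ B | P x} = {x ∈ A | P x} \ B := by
    ext; exact and_right_comm
  simp only [weightedCard, sep_inter, sep_diff]
  rw [← card_split A, ← card_split {x ∈ A | P x}, add_add_add_comm]

lemma two_le_weightedCard (h : A.Nontrivial ∨ ∃ x ∈ A, P x) : 2 ≤ weightedCard A P := by
  rcases h with ⟨x, hx, y, hy, hxy⟩ | ⟨x, hx, hPx⟩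
  · exact (Cardinal.two_le_iff.2 ⟨⟨x, hx⟩, ⟨y, hy⟩, by simpa using hxy⟩).trans le_self_add
  · rw [← one_add_one_eq_two]
    exact add_le_add
      (Cardinal.one_le_iff_ne_zero.2 (Cardinal.mk_ne_zero_iff.2 ⟨⟨x, hx⟩⟩))
      (Cardinal.one_le_iff_ne_zero.2 (Cardinal.mk_ne_zero_iff.2 ⟨⟨x, hx, hPx⟩⟩))

lemma weightedCard_le_of_subsingleton (hA : A.Subsingleton) (hne : A.Nonempty → A'.Nonempty)
    (hP : ∀ x ∈ A, P x → A'.Nontrivial ∨ ∃ y ∈ A', P' y) :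
    weightedCard A P ≤ weightedCard A' P' := by
  by_cases hPA : ∃ x ∈ A, P x
  · obtain ⟨x, hx, hPx⟩ := hPA
    calc weightedCard A P ≤ 1 + 1 := add_le_add hA.cardinalMk_le_one
          (hA.anti fun _ hy => hy.1).cardinalMk_le_one
      _ = 2 := one_add_one_eq_two
      _ ≤ weightedCard A' P' := two_le_weightedCard (hP x hx hPx)
  · have hsep : {x ∈ A | P x} = ∅ := eq_empty_of_forall_notMem fun x hx => hPA ⟨x, hx⟩
    have hcard : #A ≤ #A' := by
      rcases A.eq_empty_or_nonempty with rfl | hAne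
      · simp
      · exact hA.cardinalMk_le_one.trans (Cardinal.one_le_iff_ne_zero.2
          (Cardinal.mk_ne_zero_iff.2 (hne hAne).to_subtype))
    rw [weightedCard, hsep, Cardinal.mk_eq_zero (∅ : Set α), add_zero]
    exact hcard.trans le_self_add

end WeightedCard

section LevelIntervals

variable {β : Type*} {g h : ℝ → β} {c : β} {p q p' q' : ℝ}

/-- `[p, q]` is a maximal interval on which `g` takes the value `c`, that is, a bounded component
of the level set. -/
structure IsLevelInterval {β : Type*} (g : ℝ → β) (c : β) (p q : ℝ) : Prop where
  le : p ≤ q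
  eq : ∀ x ∈ Icc p q, g x = c
  maximal : ∀ x ∈ Icc p q, ∀ y, (∀ z ∈ uIcc x y, g z = c) → y ∈ Icc p q

lemma IsLevelInterval.unique (I : IsLevelInterval g c p q) (I' : IsLevelInterval g c p' q') {x : ℝ}
    (hx : x ∈ Icc p q) (hx' : x ∈ Icc p' q') : p = p' ∧ q = q' := by
  refine (Icc_eq_Icc_iff I.le).1 (Subset.antisymm (fun y hy => ?_) fun y hy => ?_)
  · exact I'.maximal x hx' y fun z hz => I.eq z (ordConnected_Icc.uIcc_subset hx hy hz)
  · exact I.maximal x hx y fun z hz => I'.eq z (ordConnected_Icc.uIcc_subset hx' hy hz)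

lemma IsLevelInterval.connectedComponentIn_eq (I : IsLevelInterval g c p q) {x : ℝ}
    (hx : x ∈ Icc p q) : connectedComponentIn {t | g t = c} x = Icc p q := by
  refine Subset.antisymm (fun y hy => I.maximal x hx y fun z hz => ?_)
    (isPreconnected_Icc.subset_connectedComponentIn hx I.eq)
  exact connectedComponentIn_subset {t | g t = c} x
    (isPreconnected_connectedComponentIn.ordConnected.uIcc_subset
      (mem_connectedComponentIn (F := {t | g t = c}) (I.eq x hx)) hy hz)

lemma IsLevelInterval.neg (I : IsLevelInterval g c p q) :
    IsLevelInterval (fun t => g (-t)) c (-q) (-p) where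
  le := neg_le_neg I.le
  eq x hx := I.eq (-x) (neg_mem_Icc_iff.2 hx)
  maximal x hx y hy := neg_mem_Icc_iff.1 <| I.maximal (-x) (neg_mem_Icc_iff.2 hx) (-y)
    fun z hz => by
      rw [← neg_neg z]
      refine hy (-z) ?_
      rwa [← mem_preimage (f := Neg.neg), neg_preimage, neg_uIcc]

lemma IsLevelInterval.congr {l r : ℝ} (I : IsLevelInterval g c p q) (hgh : EqOn g h (Icc l r))
    (hsub : Icc p q ⊆ Ioo l r) : IsLevelInterval h c p q where
  le := I.le
  eq x hx := (hgh (Ioo_subset_Icc_self (hsub hx))).symm.trans (I.eq x hx)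
  maximal x hx y hy := by
    have hx' := hsub hx
    have hlr : l ≤ r := (hx'.1.trans hx'.2).le
    set y' := max l (min r y)
    have hy' : y' ∈ uIcc x y := by grind [uIcc_of_le, uIcc_of_ge]
    have hlry' : y' ∈ Icc l r := ⟨le_max_left _ _, max_le hlr (min_le_left _ _)⟩
    have hclamp : y' ∈ Icc p q := I.maximal x hx y' fun z hz => by
      rw [hgh (ordConnected_Icc.uIcc_subset (Ioo_subset_Icc_self hx') hlry' hz)]
      exact hy z (uIcc_subset_uIcc_left hy' hz)
    have hyy' : y' = y := by grind
    rwa [← hyy']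

lemma apply_add_intCast_of_periodic (hg : Function.Periodic g 1) (x : ℝ) (k : ℤ) :
    g (x + k) = g x := by
  simpa using hg.int_mul k x

lemma IsLevelInterval.add_int (hg : Function.Periodic g 1) (I : IsLevelInterval g c p q) (k : ℤ) :
    IsLevelInterval g c (p + k) (q + k) where
  le := add_le_add_left I.le _
  eq x hx := by
    rw [← sub_add_cancel x k, apply_add_intCast_of_periodic hg]
    exact I.eq _ (sub_mem_Icc_iff_left.2 hx)
  maximal x hx y hy := sub_mem_Icc_iff_left.1 <|
    I.maximal (x - k) (sub_mem_Icc_iff_left.2 hx) (y - k) fun z hz => by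
      rw [← apply_add_intCast_of_periodic hg z k]
      refine hy (z + k) ?_
      rwa [← mem_preimage (f := (· + (k : ℝ))), preimage_add_const_uIcc]

lemma eq_const_of_periodic_of_forall_mem_Icc (hg : Function.Periodic g 1) {x : ℝ}
    (hx : ∀ y ∈ Icc x (x + 1), g y = c) (y : ℝ) : g y = c := by
  obtain ⟨z, hz, hyz⟩ := hg.exists_mem_Ico zero_lt_one y x
  exact hyz.trans (hx z (Ico_subset_Icc_self hz))

lemma IsLevelInterval.lt_add_one (hg : Function.Periodic g 1) (hgc : ∃ y, g y ≠ c)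
    (I : IsLevelInterval g c p q) : q < p + 1 := by
  by_contra! hle
  obtain ⟨y, hy⟩ := hgc
  exact hy (eq_const_of_periodic_of_forall_mem_Icc hg (fun x hx => I.eq x ⟨hx.1, hx.2.trans hle⟩) y)

lemma exists_isLevelInterval [TopologicalSpace β] [T2Space β] (hg : Continuous g)
    (hper : Function.Periodic g 1) (hgc : ∃ y, g y ≠ c) {t : ℝ} (ht : g t = c) :
    ∃ p q, IsLevelInterval g c p q ∧ t ∈ Icc p q := by
  set C := connectedComponentIn {x | g x = c} t
  have htC : t ∈ C := mem_connectedComponentIn ht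
  have hC : IsPreconnected C := isPreconnected_connectedComponentIn
  have hCc : ∀ x ∈ C, g x = c := connectedComponentIn_subset _ _
  have hclosed : IsClosed C := isClosed_of_closure_subset <|
    hC.closure.subset_connectedComponentIn (subset_closure htC)
      (closure_minimal hCc (isClosed_eq hg continuous_const))
  obtain ⟨y, hy⟩ := hgc
  obtain ⟨l, hl, hyl⟩ := hper.exists_mem_Ico zero_lt_one y (t - 1)
  obtain ⟨r, hr, hyr⟩ := hper.exists_mem_Ico zero_lt_one y t
  have hlC : l ∉ C := fun hl' => hy (hyl.trans (hCc l hl'))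
  have hrC : r ∉ C := fun hr' => hy (hyr.trans (hCc r hr'))
  have hbelow : BddBelow C := ⟨l, fun x hx => by
    by_contra! hxl
    exact hlC (hC.ordConnected.out hx htC ⟨hxl.le, by linarith [hl.2]⟩)⟩
  have habove : BddAbove C := ⟨r, fun x hx => by
    by_contra! hxr
    exact hrC (hC.ordConnected.out htC hx ⟨hr.1, hxr.le⟩)⟩
  have hIcc : C = Icc (sInf C) (sSup C) :=
    eq_Icc_csInf_csSup_of_connected_bdd_closed ⟨⟨t, htC⟩, hC⟩ hbelow habove hclosed
  refine ⟨sInf C, sSup C, ⟨?_, ?_, ?_⟩, hIcc ▸ htC⟩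
  · exact (csInf_le hbelow htC).trans (le_csSup habove htC)
  · rwa [← hIcc]
  · rw [← hIcc]
    intro x hx y hxy
    have hyx : y ∈ connectedComponentIn {x | g x = c} x :=
      isPreconnected_uIcc.subset_connectedComponentIn left_mem_uIcc hxy right_mem_uIcc
    rwa [← connectedComponentIn_eq hx] at hyx

end LevelIntervals

section Germs

variable {X Y : Type*} [TopologicalSpace X] [LinearOrder Y] [TopologicalSpace Y]
  [OrderClosedTopology Y] {u : X → Y} {c : Y} {s : Set X}

lemma isGlancing_Icc {g : ℝ → ℝ} {c p q : ℝ} (hpq : p ≤ q) : IsGlancing g c (Icc p q) ↔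
    ((∀ᶠ s in 𝓝[<] p, c < g s) ↔ ∀ᶠ s in 𝓝[>] q, c < g s) := by
  have before : AboveBefore g c (Icc p q) ↔ ∀ᶠ s in 𝓝[<] p, c < g s := by
    simp only [AboveBefore, csInf_Icc hpq, Filter.Eventually, mem_nhdsLT_iff_exists_Ioo_subset]
    exact ⟨fun ⟨ε, hε, H⟩ => ⟨p - ε, sub_lt_self p hε, H⟩,
      fun ⟨l, hl, H⟩ => ⟨p - l, sub_pos.2 hl, by rwa [sub_sub_cancel]⟩⟩
  have after : AboveAfter g c (Icc p q) ↔ ∀ᶠ s in 𝓝[>] q, c < g s := by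
    simp only [AboveAfter, csSup_Icc hpq, Filter.Eventually, mem_nhdsGT_iff_exists_Ioo_subset]
    exact ⟨fun ⟨ε, hε, H⟩ => ⟨q + ε, lt_add_of_pos_right q hε, H⟩,
      fun ⟨r, hr, H⟩ => ⟨r - q, sub_pos.2 hr, by rwa [add_sub_cancel]⟩⟩
  rw [IsGlancing, before, after]

lemma eventually_nhdsLT_add_int {β : Type*} {g : ℝ → β} (hg : Function.Periodic g 1)
    (P : β → Prop) (x : ℝ) (k : ℤ) :
    (∀ᶠ s in 𝓝[<] (x + k), P (g s)) ↔ ∀ᶠ s in 𝓝[<] x, P (g s) := by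
  simp only [← map_add_right_nhdsLT, eventually_map, apply_add_intCast_of_periodic hg]

lemma eventually_nhdsGT_add_int {β : Type*} {g : ℝ → β} (hg : Function.Periodic g 1)
    (P : β → Prop) (x : ℝ) (k : ℤ) :
    (∀ᶠ s in 𝓝[>] (x + k), P (g s)) ↔ ∀ᶠ s in 𝓝[>] x, P (g s) := by
  simp only [← map_add_right_nhdsGT, eventually_map, apply_add_intCast_of_periodic hg]

lemma eventually_nhdsLT_neg (P : ℝ → Prop) (x : ℝ) :
    (∀ᶠ s in 𝓝[<] (-x), P (-s)) ↔ ∀ᶠ s in 𝓝[>] x, P s :=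
  ⟨fun H => (tendsto_neg_nhdsGT.eventually H).mono fun s hs => by rwa [neg_neg] at hs,
    fun H => tendsto_neg_nhdsLT_neg.eventually H⟩

lemma lt_apply_iff_of_isPreconnected (hs : IsPreconnected s) (hu : ContinuousOn u s)
    (hne : ∀ z ∈ s, u z ≠ c) {x y : X} (hx : x ∈ s) (hy : y ∈ s) : c < u x ↔ c < u y := by
  have lt_of_lt : ∀ {x y}, x ∈ s → y ∈ s → c < u x → c < u y := fun {x y} hx hy hcx => by
    by_contra! hcy
    obtain ⟨z, hz, hzc⟩ := hs.intermediate_value hy hx hu ⟨hcy, hcx.le⟩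
    exact hne z hz hzc
  exact ⟨lt_of_lt hx hy, lt_of_lt hy hx⟩

lemma eventually_lt_iff_of_isPreconnected (hs : IsPreconnected s) (hu : ContinuousOn u s)
    (hne : ∀ z ∈ s, u z ≠ c) {F : Filter X} [F.NeBot] (hsF : s ∈ F) {x : X} (hx : x ∈ s) :
    (∀ᶠ t in F, c < u t) ↔ c < u x := by
  rw [← eventually_const (f := F) (p := c < u x)]
  exact eventually_congr (mem_of_superset hsF fun t ht =>
    lt_apply_iff_of_isPreconnected hs hu hne ht hx)

end Germs

section Components

variable {g : ℝ → ℝ} {c p q p' q' : ℝ}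

/-- The translate of `[p, q]` that `circComps` chooses to represent `[p, q]` modulo the period. -/
def circRep (p q : ℝ) : Set ℝ :=
  Icc (p - ⌊p⌋) (q - ⌊p⌋)

lemma mem_circComps_iff (hg : Continuous g) (hper : Function.Periodic g 1)
    (hgc : ∃ y, g y ≠ c) {S : Set ℝ} :
    S ∈ circComps {t | g t = c} ↔ ∃ p q, IsLevelInterval g c p q ∧ S = circRep p q := by
  constructor
  · rintro ⟨t, ht, rfl, hinf⟩
    obtain ⟨p, q, I, htI⟩ := exists_isLevelInterval hg hper hgc ht
    rw [I.connectedComponentIn_eq htI] at hinf ⊢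
    rw [csInf_Icc I.le] at hinf
    refine ⟨p, q, I, ?_⟩
    rw [circRep, Int.floor_eq_zero_iff.2 hinf, Int.cast_zero, sub_zero, sub_zero]
  · rintro ⟨p, q, I, rfl⟩
    have J : IsLevelInterval g c (p - ⌊p⌋) (q - ⌊p⌋) := by
      simpa only [Int.cast_neg, ← sub_eq_add_neg] using I.add_int hper (-⌊p⌋)
    have hmem : p - ⌊p⌋ ∈ Icc (p - ⌊p⌋) (q - ⌊p⌋) := left_mem_Icc.2 J.le
    refine ⟨_, J.eq _ hmem, (J.connectedComponentIn_eq hmem).symm, ?_⟩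
    rw [circRep, csInf_Icc J.le]
    exact ⟨Int.fract_nonneg p, Int.fract_lt_one p⟩

lemma circRep_add_int (p q : ℝ) (k : ℤ) : circRep (p + k) (q + k) = circRep p q := by
  simp only [circRep, Int.floor_add_intCast, Int.cast_add, add_sub_add_right_eq_sub]

lemma exists_eq_add_int_of_circRep_eq (hpq : p ≤ q) (hS : circRep p q = circRep p' q') :
    ∃ k : ℤ, p' = p + k ∧ q' = q + k := by
  obtain ⟨hleft, hright⟩ := (Icc_eq_Icc_iff (sub_le_sub_right hpq _)).1 hS
  refine ⟨⌊p'⌋ - ⌊p⌋, ?_, ?_⟩ <;> push_cast <;> linarith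

lemma isGlancing_circRep (hper : Function.Periodic g 1) (hpq : p ≤ q) :
    IsGlancing g c (circRep p q) ↔
      ((∀ᶠ s in 𝓝[<] p, c < g s) ↔ ∀ᶠ s in 𝓝[>] q, c < g s) := by
  rw [circRep, isGlancing_Icc (sub_le_sub_right hpq _)]
  have hleft := eventually_nhdsLT_add_int hper (c < ·) p (-⌊p⌋)
  have hright := eventually_nhdsGT_add_int hper (c < ·) q (-⌊p⌋)
  simp only [Int.cast_neg, ← sub_eq_add_neg] at hleft hright
  exact iff_congr hleft hright

/-- Number of intersections with the level `c` of a `1`-periodic function which is not constantly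
`c`: components of the level set modulo the period, glancing ones counted twice. -/
def levelCount (g : ℝ → ℝ) (c : ℝ) : Cardinal :=
  weightedCard (circComps {t | g t = c}) (IsGlancing g c)

lemma two_le_levelCount (hg : Continuous g) (hper : Function.Periodic g 1)
    (hgc : ∃ y, g y ≠ c) {t : ℝ} (ht : g t = c) : 2 ≤ levelCount g c := by
  obtain ⟨p, q, I, -⟩ := exists_isLevelInterval hg hper hgc ht
  have hS := (mem_circComps_iff hg hper hgc).2 ⟨p, q, I, rfl⟩
  refine two_le_weightedCard (or_iff_not_imp_left.2 fun hsub => ⟨_, hS, ?_⟩)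
  rw [not_nontrivial_iff] at hsub
  have hne : ∀ z ∈ Ioo q (p + 1), g z ≠ c := fun z hz hzc => by
    obtain ⟨p', q', I', hzI⟩ := exists_isLevelInterval hg hper hgc hzc
    obtain ⟨k, rfl, rfl⟩ := exists_eq_add_int_of_circRep_eq I.le
      (hsub hS ((mem_circComps_iff hg hper hgc).2 ⟨p', q', I', rfl⟩))
    have hk_pos : (0 : ℝ) < k := by linarith [hz.1, hzI.2]
    have hk_lt : (k : ℝ) < 1 := by linarith [hz.2, hzI.1]
    norm_cast at hk_pos hk_lt
    omega
  obtain ⟨m, hm⟩ := exists_between (I.lt_add_one hper hgc)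
  have hp := eventually_nhdsLT_add_int hper (c < ·) p 1
  rw [Int.cast_one] at hp
  rw [isGlancing_circRep hper I.le, ← hp,
    eventually_lt_iff_of_isPreconnected isPreconnected_Ioo hg.continuousOn hne
      (Ioo_mem_nhdsLT (hm.1.trans hm.2)) hm,
    eventually_lt_iff_of_isPreconnected isPreconnected_Ioo hg.continuousOn hne
      (Ioo_mem_nhdsGT (hm.1.trans hm.2)) hm]

end Components

section Arc

variable {g u v : ℝ → ℝ} {c p q p' q' a b l y : ℝ}

/-- The set `S` meets the arc `[a, b]` modulo the period. -/
def MeetsArc (a b : ℝ) (S : Set ℝ) : Prop :=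
  ∃ k : ℤ, (S ∩ Icc (a + k) (b + k)).Nonempty

lemma mem_circComps_inter_meetsArc_iff (hg : Continuous g) (hper : Function.Periodic g 1)
    (hgc : ∃ y, g y ≠ c) {S : Set ℝ} :
    S ∈ circComps {t | g t = c} ∩ {S | MeetsArc a b S} ↔
      ∃ p q, IsLevelInterval g c p q ∧ (Icc p q ∩ Icc a b).Nonempty ∧ S = circRep p q := by
  constructor
  · rintro ⟨hS, k, x, hxS, hxk⟩
    obtain ⟨p, q, I, rfl⟩ := (mem_circComps_iff hg hper hgc).1 hS
    have J := I.add_int hper (-⌊p⌋ - k)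
    refine ⟨_, _, J, ⟨x - k, ?_, sub_mem_Icc_iff_left.2 hxk⟩, (circRep_add_int p q _).symm⟩
    constructor <;> push_cast <;> linarith [hxS.1, hxS.2]
  · rintro ⟨p, q, I, ⟨x, hxI, hxab⟩, rfl⟩
    refine ⟨(mem_circComps_iff hg hper hgc).2 ⟨p, q, I, rfl⟩, -⌊p⌋, x - ⌊p⌋, ?_, ?_⟩
    · exact ⟨sub_le_sub_right hxI.1 _, sub_le_sub_right hxI.2 _⟩
    · constructor <;> push_cast <;> linarith [hxab.1, hxab.2]

lemma exists_subset_Ioo_of_not_meetsArc (hab : a ≤ b) (hpq : p ≤ q)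
    (hmeets : ¬ MeetsArc a b (circRep p q)) :
    ∃ k : ℤ, Icc p q ⊆ Ioo (b + k) (a + 1 + k) := by
  have hdisj : ∀ k : ℤ, ∀ x ∈ Icc p q, x ∉ Icc (a + k) (b + k) := fun k x hx hxk => by
    refine hmeets ⟨k - ⌊p⌋, x - ⌊p⌋, ⟨sub_le_sub_right hx.1 _, sub_le_sub_right hx.2 _⟩, ?_⟩
    constructor <;> push_cast <;> linarith [hxk.1, hxk.2]
  have hfloor := Int.floor_le (p - a)
  have hlt := Int.lt_floor_add_one (p - a)
  refine ⟨⌊p - a⌋, Icc_subset_Ioo ?_ ?_⟩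
  · by_contra! hpb
    exact hdisj ⌊p - a⌋ p (left_mem_Icc.2 hpq) ⟨by linarith, hpb⟩
  · by_contra! hqa
    refine hdisj (⌊p - a⌋ + 1) (a + 1 + ⌊p - a⌋) ⟨by linarith, hqa⟩ ?_
    constructor <;> push_cast <;> linarith

/-- `[p, q]` is the only level interval of `g` at level `c` that meets the arc `[a, b]`. -/
structure IsSoleLevelInterval (g : ℝ → ℝ) (c a b p q : ℝ) : Prop
    extends IsLevelInterval g c p q where
  meets : (Icc p q ∩ Icc a b).Nonempty
  covers : ∀ x ∈ Icc a b, g x = c → x ∈ Icc p q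

lemma IsSoleLevelInterval.arc_le (I : IsSoleLevelInterval g c a b p q) : a ≤ b :=
  nonempty_Icc.1 (I.meets.mono inter_subset_right)

lemma IsSoleLevelInterval.neg (I : IsSoleLevelInterval g c a b p q) :
    IsSoleLevelInterval (fun t => g (-t)) c (-b) (-a) (-q) (-p) where
  toIsLevelInterval := I.toIsLevelInterval.neg
  meets := by
    obtain ⟨x, hxI, hxab⟩ := I.meets
    exact ⟨-x, by simpa using hxI.symm, by simpa using hxab.symm⟩
  covers x hx hxc := neg_mem_Icc_iff.1 (I.covers (-x) (neg_mem_Icc_iff.2 hx) hxc)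

lemma IsSoleLevelInterval.eventually_nhdsLT_iff (I : IsSoleLevelInterval g c a b p q)
    (hg : Continuous g) (ha : g a ≠ c) : (∀ᶠ s in 𝓝[<] p, c < g s) ↔ c < g a := by
  obtain ⟨x, hxI, hxab⟩ := I.meets
  have hap : a < p := by
    by_contra! hpa
    exact ha (I.eq a ⟨hpa, hxab.1.trans hxI.2⟩)
  have hne : ∀ z ∈ Ico a p, g z ≠ c := fun z hz hzc =>
    (I.covers z ⟨hz.1, hz.2.le.trans (hxI.1.trans hxab.2)⟩ hzc).1.not_gt hz.2
  exact eventually_lt_iff_of_isPreconnected isPreconnected_Ico hg.continuousOn hne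
    (Ico_mem_nhdsLT hap) (left_mem_Ico.2 hap)

lemma IsLevelInterval.left_le_of_eqOn (I : IsLevelInterval u c p q) (I' : IsLevelInterval v c p' q')
    (huv : EqOn u v (Icc l a)) (ha : a ∈ Icc p q) (ha' : a ∈ Icc p' q') (hl : l ≤ p) : p' ≤ p := by
  refine (I'.maximal a ha' p fun z hz => ?_).1
  rw [uIcc_of_ge ha.1] at hz
  exact (huv (Icc_subset_Icc_left hl hz)).symm.trans (I.eq z ⟨hz.1, hz.2.trans ha.2⟩)

/-- If the functions take the value `c` at `a`, both level intervals start at the same point, to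
the left of `a`; otherwise neither function takes the value `c` between `a` and its interval. -/
lemma IsSoleLevelInterval.eventually_nhdsLT_iff_of_eqOn (hu : Continuous u) (hv : Continuous v)
    (huv : EqOn u v (Icc l a)) (hy : y ∈ Icc l a) (huy : u y ≠ c)
    (I : IsSoleLevelInterval u c a b p q) (I' : IsSoleLevelInterval v c a b p' q') :
    (∀ᶠ s in 𝓝[<] p, c < u s) ↔ ∀ᶠ s in 𝓝[<] p', c < v s := by
  have huva : u a = v a := huv (right_mem_Icc.2 (hy.1.trans hy.2))
  by_cases ha : u a = c
  · have haI := I.covers a (left_mem_Icc.2 I.arc_le) ha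
    have haI' := I'.covers a (left_mem_Icc.2 I'.arc_le) (huva.symm.trans ha)
    have hyp : y < p := lt_of_not_ge fun hpy => huy (I.eq y ⟨hpy, hy.2.trans haI.2⟩)
    have hyp' : y < p' := lt_of_not_ge fun hpy =>
      huy ((huv hy).trans (I'.eq y ⟨hpy, hy.2.trans haI'.2⟩))
    have hpp' : p = p' := le_antisymm
      (I'.left_le_of_eqOn I.toIsLevelInterval huv.symm haI' haI (hy.1.trans hyp'.le))
      (I.left_le_of_eqOn I'.toIsLevelInterval huv haI haI' (hy.1.trans hyp.le))
    rw [← hpp']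
    refine eventually_congr (mem_of_superset (Ioo_mem_nhdsLT hyp) fun s hs => ?_)
    rw [mem_ofPred_eq, huv ⟨hy.1.trans hs.1.le, hs.2.le.trans haI.1⟩]
  · rw [I.eventually_nhdsLT_iff hu ha, I'.eventually_nhdsLT_iff hv (huva ▸ ha), huva]

lemma IsSoleLevelInterval.eventually_nhdsGT_iff_of_eqOn {r : ℝ} (hu : Continuous u)
    (hv : Continuous v) (huv : EqOn u v (Icc b r)) (hy : y ∈ Icc b r) (huy : u y ≠ c)
    (I : IsSoleLevelInterval u c a b p q) (I' : IsSoleLevelInterval v c a b p' q') :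
    (∀ᶠ s in 𝓝[>] q, c < u s) ↔ ∀ᶠ s in 𝓝[>] q', c < v s := by
  rw [← eventually_nhdsLT_neg (c < u ·), ← eventually_nhdsLT_neg (c < v ·)]
  exact IsSoleLevelInterval.eventually_nhdsLT_iff_of_eqOn (hu.comp continuous_neg)
    (hv.comp continuous_neg) (l := -r) (fun x hx => huv (neg_mem_Icc_iff.2 (by simpa using hx)))
    (y := -y) (by simpa using hy.symm) (by rwa [neg_neg]) I.neg I'.neg

end Arc

section ReplaceArc

variable {g h : ℝ → ℝ} {c p q p' q' a b y : ℝ}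

lemma eqOn_Icc_add_int {β : Type*} {g h : ℝ → β} {l r : ℝ}
    (hh : Function.Periodic h 1) (hg : Function.Periodic g 1) (hhg : EqOn h g (Icc l r)) (k : ℤ) :
    EqOn h g (Icc (l + k) (r + k)) := fun x hx => by
  rw [← sub_add_cancel x k, apply_add_intCast_of_periodic hh, apply_add_intCast_of_periodic hg]
  exact hhg (sub_mem_Icc_iff_left.2 hx)

lemma isGlancing_circRep_iff_of_sole (hh : Continuous h) (hhper : Function.Periodic h 1)
    (hg : Continuous g) (hgper : Function.Periodic g 1) (hhg : EqOn h g (Icc b (a + 1)))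
    (hy : y ∈ Icc b (a + 1)) (hhy : h y ≠ c) (I : IsSoleLevelInterval h c a b p q)
    (I' : IsSoleLevelInterval g c a b p' q') :
    IsGlancing h c (circRep p q) ↔ IsGlancing g c (circRep p' q') := by
  have hbefore : EqOn h g (Icc (b - 1) a) := by
    simpa [← sub_eq_add_neg] using eqOn_Icc_add_int hhper hgper hhg (-1)
  rw [isGlancing_circRep hhper I.le, isGlancing_circRep hgper I'.le,
    I.eventually_nhdsLT_iff_of_eqOn (y := y - 1) hh hg hbefore
      ⟨sub_le_sub_right hy.1 1, sub_le_iff_le_add.2 hy.2⟩ (by rwa [hhper.sub_eq]) I',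
    I.eventually_nhdsGT_iff_of_eqOn hh hg hhg hy hhy I']

lemma mem_circComps_and_isGlancing_iff_of_not_meetsArc (hh : Continuous h)
    (hhper : Function.Periodic h 1) (hg : Continuous g) (hgper : Function.Periodic g 1)
    (hab : a ≤ b) (hhg : EqOn h g (Icc b (a + 1))) (hhc : ∃ y, h y ≠ c) (hgc : ∃ y, g y ≠ c)
    {S : Set ℝ} (hS : S ∈ circComps {t | h t = c} \ {S | MeetsArc a b S}) :
    S ∈ circComps {t | g t = c} ∧ (IsGlancing h c S ↔ IsGlancing g c S) := by
  obtain ⟨p, q, I, rfl⟩ := (mem_circComps_iff hh hhper hhc).1 hS.1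
  obtain ⟨k, hk⟩ := exists_subset_Ioo_of_not_meetsArc hab I.le hS.2
  have hhg' := eqOn_Icc_add_int hhper hgper hhg k
  have germ_iff {x : ℝ} (hx : x ∈ Ioo (b + k) (a + 1 + k)) (s : Set ℝ) :
      (∀ᶠ t in 𝓝[s] x, c < h t) ↔ ∀ᶠ t in 𝓝[s] x, c < g t :=
    eventually_congr <| (eventually_nhdsWithin_of_eventually_nhds (Ioo_mem_nhds hx.1 hx.2)).mono
      fun t ht => by rw [hhg' (Ioo_subset_Icc_self ht)]
  refine ⟨(mem_circComps_iff hg hgper hgc).2 ⟨p, q, I.congr hhg' hk, rfl⟩, ?_⟩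
  rw [isGlancing_circRep hhper I.le, isGlancing_circRep hgper I.le]
  exact iff_congr (germ_iff (hk (left_mem_Icc.2 I.le)) _) (germ_iff (hk (right_mem_Icc.2 I.le)) _)

lemma int_eq_zero_of_meets_translate (hper : Function.Periodic g 1) (hy : y ∈ Icc b (a + 1))
    (hgy : g y ≠ c) (I : IsLevelInterval g c p q) (hmeets : (Icc p q ∩ Icc a b).Nonempty) {k : ℤ}
    (hmeets' : (Icc (p + k) (q + k) ∩ Icc a b).Nonempty) : k = 0 := by
  obtain ⟨x, hxI, hxab⟩ := hmeets
  obtain ⟨x', hxI', hxab'⟩ := hmeets'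
  rcases lt_trichotomy k 0 with hk | rfl | hk
  · have hk' : (k : ℝ) ≤ -1 := by exact_mod_cast Int.le_sub_one_of_lt hk
    refine absurd (I.eq y ⟨?_, ?_⟩) hgy
    · linarith [hxI.1, hxab.2, hy.1]
    · linarith [hxI'.2, hxab'.1, hy.2]
  · rfl
  · have hk' : (1 : ℝ) ≤ k := by exact_mod_cast hk
    refine absurd (I.eq (y - 1) ⟨?_, ?_⟩) (by rwa [hper.sub_eq])
    · linarith [hxI'.1, hxab'.2, hy.1]
    · linarith [hxI.2, hxab.1, hy.2]

lemma IsLevelInterval.isSole_of_subsingleton (hg : Continuous g) (hper : Function.Periodic g 1)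
    (hy : y ∈ Icc b (a + 1)) (hgy : g y ≠ c)
    (hsub : (circComps {t | g t = c} ∩ {S | MeetsArc a b S}).Subsingleton)
    (I : IsLevelInterval g c p q) (hmeets : (Icc p q ∩ Icc a b).Nonempty) :
    IsSoleLevelInterval g c a b p q where
  toIsLevelInterval := I
  meets := hmeets
  covers x hx hxc := by
    obtain ⟨p', q', I', hxI'⟩ := exists_isLevelInterval hg hper ⟨y, hgy⟩ hxc
    have hmem {S} := mem_circComps_inter_meetsArc_iff (a := a) (b := b) (S := S) hg hper ⟨y, hgy⟩
    obtain ⟨k, rfl, rfl⟩ := exists_eq_add_int_of_circRep_eq I.le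
      (hsub (hmem.2 ⟨p, q, I, hmeets, rfl⟩) (hmem.2 ⟨p', q', I', ⟨x, hxI', hx⟩, rfl⟩))
    obtain rfl := int_eq_zero_of_meets_translate hper hy hgy I hmeets ⟨x, hxI', hx⟩
    simpa using hxI'

lemma IsLevelInterval.isSole_of_monotone
    (hmono : MonotoneOn h (Icc a b) ∨ AntitoneOn h (Icc a b)) (I : IsLevelInterval h c p q)
    (hmeets : (Icc p q ∩ Icc a b).Nonempty) : IsSoleLevelInterval h c a b p q where
  toIsLevelInterval := I
  meets := hmeets
  covers x' hx' hxc' := by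
    obtain ⟨x, hxI, hx⟩ := hmeets
    refine I.maximal x hxI x' fun z hz => ?_
    have hhz := monotoneOn_or_antitoneOn_iff_uIcc.1 hmono x hx x' hx' z
      (ordConnected_Icc.uIcc_subset hx hx' hz) hz
    rwa [I.eq x hxI, hxc', uIcc_self, mem_singleton_iff] at hhz

lemma exists_mem_arc_apply_eq_of_monotone (hg : Continuous g)
    (hmono : MonotoneOn h (Icc a b) ∨ AntitoneOn h (Icc a b)) (ha : h a = g a) (hb : h b = g b)
    {x : ℝ} (hx : x ∈ Icc a b) : ∃ x' ∈ Icc a b, g x' = h x := by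
  have hab := hx.1.trans hx.2
  have hmem := monotoneOn_or_antitoneOn_iff_uIcc.1 hmono a (left_mem_Icc.2 hab) b
    (right_mem_Icc.2 hab) x hx (by rwa [uIcc_of_le hab])
  rw [ha, hb] at hmem
  simpa only [uIcc_of_le hab, mem_image] using intermediate_value_uIcc hg.continuousOn hmem

lemma weightedCard_meetsArc_le (hh : Continuous h) (hhper : Function.Periodic h 1)
    (hg : Continuous g) (hgper : Function.Periodic g 1)
    (hmono : MonotoneOn h (Icc a b) ∨ AntitoneOn h (Icc a b)) (ha : h a = g a) (hb : h b = g b)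
    (hhg : EqOn h g (Icc b (a + 1))) (hy : y ∈ Icc b (a + 1)) (hhy : h y ≠ c) :
    weightedCard (circComps {t | h t = c} ∩ {S | MeetsArc a b S}) (IsGlancing h c) ≤
      weightedCard (circComps {t | g t = c} ∩ {S | MeetsArc a b S}) (IsGlancing g c) := by
  have hgy : g y ≠ c := hhg hy ▸ hhy
  have hmemh {S} := mem_circComps_inter_meetsArc_iff (a := a) (b := b) (S := S) hh hhper ⟨y, hhy⟩
  have hmemg {S} := mem_circComps_inter_meetsArc_iff (a := a) (b := b) (S := S) hg hgper ⟨y, hgy⟩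
  have exists_meeting (hne : (circComps {t | h t = c} ∩ {S | MeetsArc a b S}).Nonempty) :
      ∃ p q, IsLevelInterval g c p q ∧ (Icc p q ∩ Icc a b).Nonempty := by
    obtain ⟨S, hS⟩ := hne
    obtain ⟨p, q, I, ⟨x, hxI, hx⟩, rfl⟩ := hmemh.1 hS
    obtain ⟨x', hx', hgx'⟩ := exists_mem_arc_apply_eq_of_monotone hg hmono ha hb hx
    obtain ⟨p', q', I', hxI'⟩ := exists_isLevelInterval hg hgper ⟨y, hgy⟩ (hgx'.trans (I.eq x hxI))
    exact ⟨p', q', I', x', hxI', hx'⟩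
  refine weightedCard_le_of_subsingleton ?subsingleton ?nonempty ?glancing
  case subsingleton =>
    intro S hS S' hS'
    obtain ⟨p, q, I, hm, rfl⟩ := hmemh.1 hS
    obtain ⟨p', q', I', ⟨x, hxI', hx⟩, rfl⟩ := hmemh.1 hS'
    obtain ⟨rfl, rfl⟩ := I.unique I'
      ((I.isSole_of_monotone hmono hm).covers x hx (I'.eq x hxI')) hxI'
    rfl
  case nonempty =>
    intro hne
    obtain ⟨p, q, I, hm⟩ := exists_meeting hne
    exact ⟨_, hmemg.2 ⟨p, q, I, hm, rfl⟩⟩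
  case glancing =>
    intro S hS hglancing
    obtain ⟨p', q', I', hm'⟩ := exists_meeting ⟨S, hS⟩
    obtain ⟨p, q, I, hm, rfl⟩ := hmemh.1 hS
    refine or_iff_not_imp_left.2 fun hsub => ⟨_, hmemg.2 ⟨p', q', I', hm', rfl⟩, ?_⟩
    rw [not_nontrivial_iff] at hsub
    exact (isGlancing_circRep_iff_of_sole hh hhper hg hgper hhg hy hhy
      (I.isSole_of_monotone hmono hm)
      (I'.isSole_of_subsingleton hg hgper hy hgy hsub hm')).1 hglancing

lemma levelCount_le_of_monotone (hh : Continuous h) (hhper : Function.Periodic h 1)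
    (hg : Continuous g) (hgper : Function.Periodic g 1) (hab : a ≤ b)
    (hmono : MonotoneOn h (Icc a b) ∨ AntitoneOn h (Icc a b)) (ha : h a = g a) (hb : h b = g b)
    (hhg : EqOn h g (Icc b (a + 1))) (hy : y ∈ Icc b (a + 1)) (hhy : h y ≠ c) :
    levelCount h c ≤ levelCount g c := by
  rw [levelCount, levelCount,
    ← weightedCard_inter_add_diff (circComps {t | h t = c}) {S | MeetsArc a b S},
    ← weightedCard_inter_add_diff (circComps {t | g t = c}) {S | MeetsArc a b S}]
  have houtside {S} (hS : S ∈ circComps {t | h t = c} \ {S | MeetsArc a b S}) :=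
    mem_circComps_and_isGlancing_iff_of_not_meetsArc hh hhper hg hgper hab hhg ⟨y, hhy⟩
      ⟨y, hhg hy ▸ hhy⟩ hS
  exact add_le_add (weightedCard_meetsArc_le hh hhper hg hgper hmono ha hb hhg hy hhy)
    (weightedCard_mono (fun S hS => ⟨(houtside hS).1, hS.2⟩) fun S hS => (houtside hS).2.1)

end ReplaceArc

section CutCount

variable {K Kstar : ℝ → E} {f : E →L[ℝ] ℝ} {c a b : ℝ}

lemma cutCount_of_forall_eq (hf : ∀ t, f (K t) = c) : cutCount K f c = 2 :=
  if_pos (eq_univ_of_forall hf)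

lemma cutCount_of_exists_ne (hf : ∃ t, f (K t) ≠ c) :
    cutCount K f c = levelCount (fun t => f (K t)) c :=
  if_neg fun huniv => hf.elim fun t ht => ht (eq_univ_iff_forall.1 huniv t)

lemma two_le_cutCount (hK : Continuous K) (hper : Function.Periodic K 1) {t : ℝ}
    (ht : f (K t) = c) : 2 ≤ cutCount K f c := by
  by_cases hf : ∀ t, f (K t) = c
  · rw [cutCount_of_forall_eq hf]
  · rw [cutCount_of_exists_ne (not_forall.1 hf)]
    exact two_le_levelCount (f.continuous.comp hK) (hper.comp f) (not_forall.1 hf) ht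

lemma hull_subset_of_cutCount_le (hle : ∀ f c, cutCount Kstar f c ≤ cutCount K f c) (n : ℕ) :
    hull Kstar n ⊆ hull K n :=
  fun p hp f hf => (hp f hf).trans (hle f (f p))

lemma cutCount_le_of_monotone (hK : Continuous K) (hper : Function.Periodic K 1)
    (hKs : Continuous Kstar) (hpers : Function.Periodic Kstar 1) (hab : a ≤ b) (hba : b ≤ a + 1)
    (hmono : MonotoneOn (fun t => f (Kstar t)) (Icc a b) ∨
      AntitoneOn (fun t => f (Kstar t)) (Icc a b))
    (hsame : EqOn Kstar K (Icc b (a + 1))) : cutCount Kstar f c ≤ cutCount K f c := by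
  have hb : Kstar b = K b := hsame (left_mem_Icc.2 hba)
  have ha : Kstar a = K a := by
    rw [← hpers a, ← hper a]
    exact hsame (right_mem_Icc.2 hba)
  by_cases hne : ∃ y ∈ Icc b (a + 1), f (Kstar y) ≠ c
  · obtain ⟨y, hy, hfy⟩ := hne
    rw [cutCount_of_exists_ne ⟨y, hfy⟩, cutCount_of_exists_ne ⟨y, hsame hy ▸ hfy⟩]
    exact levelCount_le_of_monotone (f.continuous.comp hKs) (hpers.comp f) (f.continuous.comp hK)
      (hper.comp f) hab hmono (congrArg f ha) (congrArg f hb) hsame.comp_left hy hfy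
  · push Not at hne
    have hfb : f (Kstar b) = c := hne b (left_mem_Icc.2 hba)
    have hfa : f (Kstar a) = c := hpers a ▸ hne (a + 1) (right_mem_Icc.2 hba)
    have hperiod : ∀ t ∈ Icc a (a + 1), f (Kstar t) = c := fun t ht => by
      rcases le_total b t with hbt | htb
      · exact hne t ⟨hbt, ht.2⟩
      · have hft := monotoneOn_or_antitoneOn_iff_uIcc.1 hmono a (left_mem_Icc.2 hab) b
          (right_mem_Icc.2 hab) t ⟨ht.1, htb⟩ (Icc_subset_uIcc ⟨ht.1, htb⟩)
        rwa [hfa, hfb, uIcc_self, mem_singleton_iff] at hft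
    rw [cutCount_of_forall_eq (eq_const_of_periodic_of_forall_mem_Icc (hpers.comp f) hperiod)]
    exact two_le_cutCount hK hper (hb ▸ hfb)

lemma monotoneOn_or_antitoneOn_of_eq_add_smul {γ : ℝ → E} {φ : ℝ → ℝ} {s : Set ℝ} {x w : E}
    (hφ : MonotoneOn φ s) (hγ : ∀ t ∈ s, γ t = x + φ t • w) (f : E →L[ℝ] ℝ) :
    MonotoneOn (fun t => f (γ t)) s ∨ AntitoneOn (fun t => f (γ t)) s := by
  have hfγ : EqOn (fun t => f (γ t)) (fun t => f x + φ t * f w) s := fun t ht => by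
    simp only [hγ t ht, map_add, map_smul, smul_eq_mul]
  refine (le_total 0 (f w)).imp (fun hw => MonotoneOn.congr ?_ hfγ.symm)
    fun hw => AntitoneOn.congr ?_ hfγ.symm
  · exact fun t ht t' ht' htt' =>
      add_le_add_right (mul_le_mul_of_nonneg_right (hφ ht ht' htt') hw) _
  · exact fun t ht t' ht' htt' =>
      add_le_add_right (mul_le_mul_of_nonpos_right (hφ ht ht' htt') hw) _

theorem cutCount_replace_arc_le_general (hK : Continuous K) (hper : Function.Periodic K 1)
    (hKs : Continuous Kstar) (hpers : Function.Periodic Kstar 1) (hab : a ≤ b) (hba : b ≤ a + 1)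
    (hmono : ∀ f : E →L[ℝ] ℝ, MonotoneOn (fun t => f (Kstar t)) (Icc a b) ∨
      AntitoneOn (fun t => f (Kstar t)) (Icc a b))
    (hsame : ∀ t ∈ Icc b (a + 1), Kstar t = K t) :
    (∀ (f : E →L[ℝ] ℝ) (c : ℝ), cutCount Kstar f c ≤ cutCount K f c) ∧
      ∀ n : ℕ, hull Kstar n ⊆ hull K n :=
  have hle (f : E →L[ℝ] ℝ) (c : ℝ) : cutCount Kstar f c ≤ cutCount K f c :=
    cutCount_le_of_monotone hK hper hKs hpers hab hba (hmono f) hsame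
  ⟨hle, hull_subset_of_cutCount_le hle⟩

end CutCount

/-- If `K*` results from replacing the subarc of `K` on `[a,b]`
by the straight segment joining its endpoints, then no hyperplane is cut more
often by `K*` than by `K`; consequently `hₙ(K*) ⊆ hₙ(K)` for all `n`. -/
theorem cutCount_replace_arc_le (d : ℕ)
    (K Kstar : ℝ → EuclideanSpace ℝ (Fin d))
    (hK : Continuous K) (hper : Function.Periodic K 1)
    (hKs : Continuous Kstar) (hpers : Function.Periodic Kstar 1)
    (a b : ℝ) (hab : a < b) (hba : b ≤ a + 1)
    (hseg : ∀ t ∈ Icc a b,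
      Kstar t = K a + ((t - a) / (b - a)) • (K b - K a))
    (hsame : ∀ t ∈ Icc b (a + 1), Kstar t = K t) :
    (∀ (f : EuclideanSpace ℝ (Fin d) →L[ℝ] ℝ) (c : ℝ),
        cutCount Kstar f c ≤ cutCount K f c) ∧
    ∀ n : ℕ, hull Kstar n ⊆ hull K n :=
  cutCount_replace_arc_le_general hK hper hKs hpers hab.le hba
    (monotoneOn_or_antitoneOn_of_eq_add_smul
      (fun _ _ _ _ hst => div_le_div_of_nonneg_right (sub_le_sub_right hst a) (sub_nonneg.2 hab.le))
      hseg) hsame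
end
end

section
/- If p lies in the n-th hull hₙ(K) of a closed rectifiable curve K in ℝ³ with p ∉ K, then the cone from p over K has cone angle at least 2πn; that is, the length of the radial projection of K to the unit sphere centered at p is at least 2πn. -/
open Set
open scoped Classical

noncomputable section

variable {E : Type*} [NormedAddCommGroup E] [NormedSpace ℝ E]

/-!
Let `γ` be the radial projection of `K` from `p`. For almost every `v` the function `⟪v, γ ·⟫` has
no local extremum of value `0`, so that `K` has no glancing intersection with the hyperplane through
`p` orthogonal to `v`, and the hull condition provides `2 * n` zeros of `⟪v, γ ·⟫`. By the Crofton
inequality, the expected number of these zeros for a random `v` is at most `length γ / π`.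

For the Crofton inequality it suffices to count sign changes of `⟪v, γ ·⟫` on finer and finer grids,
by Fatou's lemma. The hyperplane orthogonal to `v` separates two unit vectors at angle `θ` when `v`
lies in a lune of angle `θ`; as `⌊π / θ⌋` rotated copies of this lune fit disjointly into a half
turn, this happens with probability at most `1 / ⌊π / θ⌋`, which is asymptotic to `θ / π`.
-/

open MeasureTheory Filter Topology
open scoped Real RealInnerProductSpace ENNReal Cardinal

/-- `c` is a crossing level of `g` when `g` has no local extremum of value `c`, so that `g` takes
values on both sides of `c` arbitrarily close to every point of the level set. -/
def IsCrossingLevel {X : Type*} [TopologicalSpace X] (g : X → ℝ) (c : ℝ) : Prop :=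
  ∀ z, g z = c → ¬ IsLocalExtr g z

namespace IsCrossingLevel

variable {X : Type*} [TopologicalSpace X] {g : X → ℝ} {c : ℝ}

lemma frequently_lt (hg : IsCrossingLevel g c) {z : X} (hz : g z = c) : ∃ᶠ x in 𝓝 z, g x < c := by
  intro h
  exact hg z hz (.inl (by simpa [IsLocalMin, IsMinFilter, hz] using h))

lemma frequently_gt (hg : IsCrossingLevel g c) {z : X} (hz : g z = c) : ∃ᶠ x in 𝓝 z, c < g x := by
  intro h
  exact hg z hz (.inr (by simpa [IsLocalMax, IsMaxFilter, hz] using h))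

lemma interior_eq_empty (hg : IsCrossingLevel g c) : interior {x | g x = c} = ∅ := by
  refine eq_empty_of_forall_notMem fun z hz => ?_
  have hconst : ∀ᶠ x in 𝓝 z, g x = c := mem_interior_iff_mem_nhds.1 hz
  exact hg.frequently_lt hconst.self_of_nhds (hconst.mono fun x hx => hx.not_lt)

end IsCrossingLevel

lemma connectedComponentIn_eq_singleton_of_interior_eq_empty {α : Type*} [TopologicalSpace α]
    [LinearOrder α] [OrderTopology α] [DenselyOrdered α] {Z : Set α} (hZ : interior Z = ∅) {t : α}
    (ht : t ∈ Z) : connectedComponentIn Z t = {t} := by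
  refine Subsingleton.eq_singleton_of_mem ?_ (mem_connectedComponentIn ht)
  by_contra hnontrivial
  obtain ⟨a, ha, b, hb, hab⟩ := (not_subsingleton_iff.1 hnontrivial).exists_lt
  have hsub : Ioo a b ⊆ Z := Ioo_subset_Icc_self.trans <|
    (isPreconnected_connectedComponentIn.Icc_subset ha hb).trans (connectedComponentIn_subset Z t)
  have hempty : Ioo a b ⊆ ∅ := hZ ▸ interior_maximal hsub isOpen_Ioo
  exact (nonempty_Ioo.2 hab).not_subset_empty hempty

lemma aboveAfter_singleton {g : ℝ → ℝ} {c t : ℝ} :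
    AboveAfter g c {t} ↔ ∀ᶠ s in 𝓝[>] t, c < g s := by
  rw [AboveAfter, csSup_singleton, Filter.Eventually, mem_nhdsGT_iff_exists_Ioo_subset]
  constructor
  · rintro ⟨ε, hε, h⟩
    exact ⟨t + ε, by simpa using hε, h⟩
  · rintro ⟨u, hu, h⟩
    exact ⟨u - t, sub_pos.2 hu, by rwa [add_sub_cancel]⟩

lemma aboveBefore_singleton {g : ℝ → ℝ} {c t : ℝ} :
    AboveBefore g c {t} ↔ ∀ᶠ s in 𝓝[<] t, c < g s := by
  rw [AboveBefore, csInf_singleton, Filter.Eventually, mem_nhdsLT_iff_exists_Ioo_subset]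
  constructor
  · rintro ⟨ε, hε, h⟩
    exact ⟨t - ε, by simpa using hε, h⟩
  · rintro ⟨l, hl, h⟩
    exact ⟨t - l, sub_pos.2 hl, by rwa [sub_sub_cancel]⟩

lemma eventually_nhdsGT_gt_or_lt {α : Type*} [TopologicalSpace α] [LinearOrder α]
    [OrderClosedTopology α] {g : ℝ → α} (hg : Continuous g) {c : α} {t : ℝ}
    (h : ∀ᶠ s in 𝓝[>] t, g s ≠ c) : (∀ᶠ s in 𝓝[>] t, c < g s) ∨ ∀ᶠ s in 𝓝[>] t, g s < c := by
  obtain ⟨u, hu, hne⟩ := mem_nhdsGT_iff_exists_Ioo_subset.1 h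
  have hmem : Ioo t u ∈ 𝓝[>] t := Ioo_mem_nhdsGT hu
  exact (isPreconnected_Ioo.mapsTo_Ioi_or_Iio hg.continuousOn hne).imp
    (mem_of_superset hmem) (mem_of_superset hmem)

lemma eventually_nhdsLT_gt_or_lt {α : Type*} [TopologicalSpace α] [LinearOrder α]
    [OrderClosedTopology α] {g : ℝ → α} (hg : Continuous g) {c : α} {t : ℝ}
    (h : ∀ᶠ s in 𝓝[<] t, g s ≠ c) : (∀ᶠ s in 𝓝[<] t, c < g s) ∨ ∀ᶠ s in 𝓝[<] t, g s < c := by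
  obtain ⟨l, hl, hne⟩ := mem_nhdsLT_iff_exists_Ioo_subset.1 h
  have hmem : Ioo l t ∈ 𝓝[<] t := Ioo_mem_nhdsLT hl
  exact (isPreconnected_Ioo.mapsTo_Ioi_or_Iio hg.continuousOn hne).imp
    (mem_of_superset hmem) (mem_of_superset hmem)

lemma eventually_nhds_of_nhdsLT_of_nhdsGT {α : Type*} [TopologicalSpace α] [LinearOrder α]
    {P : α → Prop} {t : α} (hlt : ∀ᶠ s in 𝓝[<] t, P s) (ht : P t) (hgt : ∀ᶠ s in 𝓝[>] t, P s) :
    ∀ᶠ s in 𝓝 t, P s := by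
  rw [← nhdsNE_sup_pure, ← nhdsLT_sup_nhdsGT]
  exact eventually_sup.2 ⟨eventually_sup.2 ⟨hlt, hgt⟩, ht⟩

lemma IsCrossingLevel.not_isGlancing_singleton {g : ℝ → ℝ} {c t : ℝ} (hg : IsCrossingLevel g c)
    (hcont : Continuous g) (ht : g t = c) (hiso : ∀ᶠ s in 𝓝[≠] t, g s ≠ c) :
    ¬ IsGlancing g c {t} := by
  rw [IsGlancing, aboveBefore_singleton, aboveAfter_singleton]
  rw [← nhdsLT_sup_nhdsGT, eventually_sup] at hiso
  intro hglance
  rcases eventually_nhdsGT_gt_or_lt hcont hiso.2 with hafter | hafter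
  · exact hg.frequently_lt ht <| eventually_nhds_of_nhdsLT_of_nhdsGT
      ((hglance.2 hafter).mono fun _ hs => hs.not_gt) ht.not_lt (hafter.mono fun _ hs => hs.not_gt)
  · rcases eventually_nhdsLT_gt_or_lt hcont hiso.1 with hbefore | hbefore
    · obtain ⟨s, hgt, hlt⟩ := ((hglance.1 hbefore).and hafter).exists
      exact hgt.not_gt hlt
    · exact hg.frequently_gt ht <| eventually_nhds_of_nhdsLT_of_nhdsGT
        (hbefore.mono fun _ hs => hs.not_gt) ht.not_gt (hafter.mono fun _ hs => hs.not_gt)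

lemma circComps_subset_image_singleton {Z : Set ℝ} (hZ : interior Z = ∅) :
    circComps Z ⊆ (fun t : ℝ => ({t} : Set ℝ)) '' (Z ∩ Ico 0 1) := by
  rintro S ⟨t, ht, rfl, hS⟩
  rw [connectedComponentIn_eq_singleton_of_interior_eq_empty hZ ht] at hS ⊢
  exact ⟨t, ⟨ht, by simpa using hS⟩, rfl⟩

lemma IsCrossingLevel.mk_circComps_add_mk_glancing_le {g : ℝ → ℝ} {c : ℝ}
    (hg : IsCrossingLevel g c) (hcont : Continuous g) (h0 : g 0 ≠ c)
    (hfin : ({t | g t = c} ∩ Ioo 0 1).Finite) :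
    #(circComps {t | g t = c}) + #{S ∈ circComps {t | g t = c} | IsGlancing g c S} ≤
      #({t | g t = c} ∩ Ioo (0 : ℝ) 1 : Set ℝ) := by
  set Z : Set ℝ := {t | g t = c}
  have hcomps : circComps Z ⊆ (fun t : ℝ => ({t} : Set ℝ)) '' (Z ∩ Ioo 0 1) := by
    refine (circComps_subset_image_singleton hg.interior_eq_empty).trans (image_mono ?_)
    rintro t ⟨ht, ht0, ht1⟩
    exact ⟨ht, ht0.lt_of_ne (by rintro rfl; exact h0 ht), ht1⟩
  have hglancing : {S ∈ circComps Z | IsGlancing g c S} = ∅ := by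
    refine eq_empty_of_forall_notMem fun S ⟨hS, hglance⟩ => ?_
    obtain ⟨t, ⟨ht, ht01⟩, rfl⟩ := hcomps hS
    have hothers : ((Z ∩ Ioo 0 1) \ {t})ᶜ ∈ 𝓝 t :=
      (hfin.subset sdiff_subset).isClosed.isOpen_compl.mem_nhds (by simp)
    have hiso : ∀ᶠ s in 𝓝[≠] t, g s ≠ c := by
      filter_upwards [nhdsWithin_le_nhds hothers,
        nhdsWithin_le_nhds (isOpen_Ioo.mem_nhds ht01), self_mem_nhdsWithin] with s hs hs01 hne hsZ
      exact hs ⟨⟨hsZ, hs01⟩, hne⟩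
    exact hg.not_isGlancing_singleton hcont ht hiso hglance
  rw [hglancing, Cardinal.mk_eq_zero (∅ : Set (Set ℝ)), add_zero]
  exact (Cardinal.mk_le_mk_of_subset hcomps).trans Cardinal.mk_image_le

lemma CutsAtLeast.le_encard {K : ℝ → E} {f : E →L[ℝ] ℝ} {c : ℝ} {m : ℕ}
    (h : CutsAtLeast K f c m) (hK : Continuous K) (hcross : IsCrossingLevel (fun t => f (K t)) c)
    (h0 : f (K 0) ≠ c) : (m : ℕ∞) ≤ ({t | f (K t) = c} ∩ Ioo (0 : ℝ) 1).encard := by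
  by_cases hfin : ({t | f (K t) = c} ∩ Ioo (0 : ℝ) 1).Finite
  · have hnot : {t | f (K t) = c} ≠ univ := fun huniv =>
      h0 (huniv.symm ▸ mem_univ (0 : ℝ) : (0 : ℝ) ∈ {t | f (K t) = c})
    rw [CutsAtLeast, cutCount, if_neg hnot] at h
    have hcount := h.trans
      (hcross.mk_circComps_add_mk_glancing_le (f.continuous.comp hK) h0 hfin)
    simpa only [map_natCast, toENat_cardinalMk] using OrderHomClass.mono Cardinal.toENat hcount
  · rw [Set.Infinite.encard_eq hfin]
    exact le_top

/-! ### Sign changes on regular grids -/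

lemma exists_mem_uIcc_mul_succ_neg {R : Type*} [CommRing R] [LinearOrder R]
    [IsStrictOrderedRing R] {s : ℕ → R} (hs : ∀ k, s k ≠ 0) {i j : ℕ} (hij : s i * s j < 0) :
    ∃ k ∈ uIcc i j, s k * s (k + 1) < 0 := by
  wlog hle : i ≤ j generalizing i j
  · rw [uIcc_comm]
    exact this (by rwa [mul_comm]) (le_of_not_ge hle)
  rw [uIcc_of_le hle]
  induction j, hle using Nat.le_induction with
  | base => exact absurd hij (mul_self_nonneg _).not_gt
  | succ j hle ih =>
    rcases (mul_ne_zero (hs i) (hs j)).lt_or_gt with hneg | hpos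
    · obtain ⟨k, hk, hsk⟩ := ih hneg
      exact ⟨k, Icc_subset_Icc_right j.le_succ hk, hsk⟩
    · have hprod : (s i * s i) * (s j * s (j + 1)) < 0 := by
        rw [mul_mul_mul_comm]
        exact mul_neg_of_pos_of_neg hpos hij
      exact ⟨j, ⟨hle, j.le_succ⟩, neg_of_mul_neg_right hprod (mul_self_nonneg _)⟩

lemma eventually_exists_natCast_div_mem {U : Set ℝ} (hU : IsOpen U) {x : ℝ} (hx : x ∈ U)
    (hx0 : 0 ≤ x) : ∀ᶠ N : ℕ in atTop, ∃ i : ℕ, (i : ℝ) / N ∈ U := by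
  have h := (tendsto_nat_floor_mul_div_atTop hx0).comp (tendsto_natCast_atTop_atTop (R := ℝ))
  filter_upwards [h (hU.mem_nhds hx)] with N hN
  exact ⟨_, hN⟩

/-- The indices `i < N` for which `g` changes sign between the consecutive points `i / N` and
`(i + 1) / N` of the regular grid of `[0, 1]`. -/
def signChanges (g : ℝ → ℝ) (N : ℕ) : Finset ℕ :=
  {i ∈ Finset.range N | g ((i : ℝ) / N) * g (((i + 1 : ℕ) : ℝ) / N) < 0}

lemma eventually_exists_signChanges {g : ℝ → ℝ} (hcont : Continuous g)
    (hrat : ∀ q : ℚ, g q ≠ 0) (hg : IsCrossingLevel g 0) {z : ℝ} (hz : g z = 0)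
    {U : Set ℝ} (hU : U ∈ 𝓝 z) (hz01 : z ∈ Ioo (0 : ℝ) 1) :
    ∀ᶠ N : ℕ in atTop, ∃ i ∈ signChanges g N, (i : ℝ) / N ∈ U := by
  obtain ⟨r, hr, hball⟩ := Metric.mem_nhds_iff.1 (inter_mem hU (isOpen_Ioo.mem_nhds hz01))
  have hgrid {x : ℝ} {W : Set ℝ} (hW : IsOpen W) (hx : x ∈ Metric.ball z r ∩ W) :
      ∀ᶠ N : ℕ in atTop, ∃ i : ℕ, (i : ℝ) / N ∈ Metric.ball z r ∩ W :=
    eventually_exists_natCast_div_mem (Metric.isOpen_ball.inter hW) hx (hball hx.1).2.1.le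
  obtain ⟨x, hgx, hx⟩ := ((hg.frequently_lt hz).and_eventually (Metric.ball_mem_nhds z hr)).exists
  obtain ⟨y, hgy, hy⟩ := ((hg.frequently_gt hz).and_eventually (Metric.ball_mem_nhds z hr)).exists
  filter_upwards [hgrid (isOpen_lt hcont continuous_const) ⟨hx, hgx⟩,
    hgrid (isOpen_lt continuous_const hcont) ⟨hy, hgy⟩, eventually_gt_atTop 0]
    with N ⟨i, hi, hgi⟩ ⟨j, hj, hgj⟩ hN
  obtain ⟨k, hk, hgk⟩ := exists_mem_uIcc_mul_succ_neg (s := fun k : ℕ => g ((k : ℝ) / N))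
    (fun k => by simpa using hrat ((k : ℚ) / N)) (mul_neg_of_neg_of_pos hgi hgj)
  have hmono : Monotone fun k : ℕ => (k : ℝ) / N := fun _ _ h => by dsimp only; gcongr
  have hkball : (k : ℝ) / N ∈ Metric.ball z r :=
    (convex_ball z r).ordConnected.uIcc_subset hi hj (hmono.mapsTo_uIcc hk)
  have hkN : k < N := by
    have := (hball hkball).2.2
    rw [div_lt_one (by exact_mod_cast hN)] at this
    exact_mod_cast this
  exact ⟨k, Finset.mem_filter.2 ⟨Finset.mem_range.2 hkN, hgk⟩, (hball hkball).1⟩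

lemma eventually_card_le_card_signChanges {g : ℝ → ℝ} (hcont : Continuous g)
    (hrat : ∀ q : ℚ, g q ≠ 0) (hg : IsCrossingLevel g 0) {T : Finset ℝ}
    (hT : ↑T ⊆ {t | g t = 0} ∩ Ioo 0 1) :
    ∀ᶠ N : ℕ in atTop, T.card ≤ (signChanges g N).card := by
  obtain ⟨U, hU, hdisj⟩ := T.finite_toSet.t2_separation
  have hlocal := (eventually_all_finset T).2 fun z hz => eventually_exists_signChanges hcont hrat hg
    (hT hz).1 ((hU z).2.mem_nhds (hU z).1) (hT hz).2
  filter_upwards [hlocal] with N hN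
  choose! i hi hiU using hN
  refine Finset.card_le_card_of_injOn i hi fun z hz w hw hzw => ?_
  by_contra hne
  exact disjoint_left.1 (hdisj hz hw hne) (hiU z hz) (hzw ▸ hiU w hw)

lemma coe_encard_le_of_forall_finset {α : Type*} {S : Set α} {x : ℝ≥0∞}
    (h : ∀ T : Finset α, ↑T ⊆ S → (T.card : ℝ≥0∞) ≤ x) : (S.encard : ℝ≥0∞) ≤ x := by
  rcases S.finite_or_infinite with hfin | hinf
  · simpa [hfin.encard_eq_coe_toFinset_card] using h hfin.toFinset (by simp)
  · suffices x = ∞ by simp [this]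
    refine ENNReal.eq_top_of_forall_nnreal_le fun r => ?_
    obtain ⟨m, hm⟩ := exists_nat_ge r
    obtain ⟨T, hT, rfl⟩ := hinf.exists_subset_card_eq m
    exact (by exact_mod_cast hm : (r : ℝ≥0∞) ≤ T.card).trans (h T hT)

lemma encard_le_liminf_card_signChanges {g : ℝ → ℝ} (hcont : Continuous g)
    (hrat : ∀ q : ℚ, g q ≠ 0) (hg : IsCrossingLevel g 0) :
    (({t | g t = 0} ∩ Ioo (0 : ℝ) 1).encard : ℝ≥0∞) ≤
      liminf (fun N => ((signChanges g N).card : ℝ≥0∞)) atTop := by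
  refine coe_encard_le_of_forall_finset fun T hT => le_liminf_of_le (by isBoundedDefault) ?_
  filter_upwards [eventually_card_le_card_signChanges hcont hrat hg hT] with N hN
  exact_mod_cast hN

/-! ### Lunes -/

section RandomHyperplane

variable {V : Type*} [NormedAddCommGroup V] [InnerProductSpace ℝ V]

/-- The normals `v` of the hyperplanes through the origin that strictly separate `a` from `b`; on
the unit sphere this is a pair of antipodal lunes. -/
def lune (a b : V) : Set V := {v | ⟪v, a⟫ * ⟪v, b⟫ < 0}

lemma isOpen_lune (a b : V) : IsOpen (lune a b) := isOpen_lt (by fun_prop) continuous_const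

lemma lune_comm (a b : V) : lune a b = lune b a := by
  simp only [lune, mul_comm]

lemma lune_self (a : V) : lune a a = ∅ :=
  eq_empty_of_forall_notMem fun v hv => (mul_self_nonneg ⟪v, a⟫).not_gt hv

lemma lune_smul_smul {r s : ℝ} (h : 0 < r * s) (a b : V) : lune (r • a) (s • b) = lune a b := by
  ext v
  simp only [lune, mem_ofPred_eq, real_inner_smul_right, mul_mul_mul_comm r]
  exact smul_neg_iff_of_pos_left h

lemma preimage_lune (R : V ≃ₗᵢ[ℝ] V) (a b : V) : R ⁻¹' lune (R a) (R b) = lune a b := by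
  simp only [lune, preimage_ofPred_eq, R.inner_map_map]

/-- The great circle arc from `sin θ • a` at parameter `0` to `sin θ • b` at parameter `θ`, where
`θ` is the angle between `a` and `b`. The factor `sin θ` avoids a division. -/
def slerp (a b : V) (y : ℝ) : V :=
  Real.sin (InnerProductGeometry.angle a b - y) • a + Real.sin y • b

lemma slerp_zero (a b : V) :
    slerp a b 0 = Real.sin (InnerProductGeometry.angle a b) • a := by
  simp [slerp]

lemma slerp_angle (a b : V) :
    slerp a b (InnerProductGeometry.angle a b) = Real.sin (InnerProductGeometry.angle a b) • b := by
  simp [slerp]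

lemma continuous_slerp (a b : V) : Continuous (slerp a b) := by
  unfold slerp
  fun_prop

lemma inner_slerp_slerp {a b : V} (ha : ‖a‖ = 1) (hb : ‖b‖ = 1) (s t : ℝ) :
    ⟪slerp a b s, slerp a b t⟫ =
      Real.sin (InnerProductGeometry.angle a b) ^ 2 * Real.cos (s - t) := by
  have hab := InnerProductGeometry.inner_eq_cos_angle_of_norm_eq_one ha hb
  have hba := (real_inner_comm a b).trans hab
  simp only [slerp, inner_add_left, inner_add_right, real_inner_smul_left, real_inner_smul_right,
    real_inner_self_eq_norm_sq, ha, hb, hab, hba, Real.sin_sub, Real.cos_sub]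
  set θ := InnerProductGeometry.angle a b
  linear_combination -(Real.sin s * Real.sin t) * Real.sin_sq_add_cos_sq θ

lemma norm_slerp_eq_norm_slerp {a b : V} (ha : ‖a‖ = 1) (hb : ‖b‖ = 1) (s t : ℝ) :
    ‖slerp a b s‖ = ‖slerp a b t‖ := by
  simp only [norm_eq_sqrt_real_inner, inner_slerp_slerp ha hb, sub_self]

lemma sin_sub_smul_slerp (a b : V) (r s t : ℝ) :
    Real.sin (t - r) • slerp a b s =
      Real.sin (t - s) • slerp a b r + Real.sin (s - r) • slerp a b t := by
  simp only [slerp, Real.sin_sub]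
  module

lemma exists_mem_Ioo_inner_slerp_eq_zero {a b v : V} {s t : ℝ} (hst : s ≤ t)
    (hv : v ∈ lune (slerp a b s) (slerp a b t)) : ∃ r ∈ Ioo s t, ⟪v, slerp a b r⟫ = 0 := by
  have hcont : Continuous fun y => ⟪v, slerp a b y⟫ :=
    continuous_const.inner (continuous_slerp a b)
  have hzero : (0 : ℝ) ∈ uIcc ⟪v, slerp a b s⟫ ⟪v, slerp a b t⟫ := by
    rw [mem_uIcc]
    exact (mul_neg_iff.1 hv).symm.imp (fun h => ⟨h.1.le, h.2.le⟩) fun h => ⟨h.2.le, h.1.le⟩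
  obtain ⟨r, hr, hr0⟩ := intermediate_value_uIcc hcont.continuousOn hzero
  rw [uIcc_of_le hst] at hr
  refine ⟨r, ⟨hr.1.lt_of_ne ?_, hr.2.lt_of_ne ?_⟩, hr0⟩
  · rintro rfl
    exact left_ne_zero_of_mul hv.ne hr0
  · rintro rfl
    exact right_ne_zero_of_mul hv.ne hr0

/-- A nonzero sinusoid has at most one zero in an open half period. -/
lemma disjoint_lune_slerp (a b : V) {s t s' t' : ℝ} (hst : s ≤ t) (hts : t ≤ s') (hst' : s' ≤ t')
    (hpi : t' - s ≤ π) :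
    Disjoint (lune (slerp a b s) (slerp a b t)) (lune (slerp a b s') (slerp a b t')) := by
  refine disjoint_left.2 fun v hv hv' => ?_
  obtain ⟨r, hr, hr0⟩ := exists_mem_Ioo_inner_slerp_eq_zero hst hv
  obtain ⟨r', hr', hr0'⟩ := exists_mem_Ioo_inner_slerp_eq_zero hst' hv'
  have hsin : 0 < Real.sin (r' - r) :=
    Real.sin_pos_of_pos_of_lt_pi (by linarith [hr.2, hr'.1]) (by linarith [hr.1, hr'.2])
  have hvanish := congrArg (inner ℝ v) (sin_sub_smul_slerp a b r s r')
  simp only [inner_add_right, real_inner_smul_right, hr0, hr0', mul_zero, add_zero, mul_eq_zero,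
    hsin.ne', false_or] at hvanish
  exact left_ne_zero_of_mul hv.ne hvanish

lemma norm_sub_eq_two_mul_sin_half_angle {a b : V} (ha : ‖a‖ = 1) (hb : ‖b‖ = 1) :
    ‖a - b‖ = 2 * Real.sin (InnerProductGeometry.angle a b / 2) := by
  set θ := InnerProductGeometry.angle a b
  have hsin : 0 ≤ Real.sin (θ / 2) :=
    Real.sin_nonneg_of_nonneg_of_le_pi (by linarith [InnerProductGeometry.angle_nonneg a b])
      (by linarith [InnerProductGeometry.angle_le_pi a b, Real.pi_pos])
  refine (pow_left_inj₀ (norm_nonneg _) (by positivity) two_ne_zero).1 ?_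
  rw [norm_sub_sq_real, ha, hb, InnerProductGeometry.inner_eq_cos_angle_of_norm_eq_one ha hb,
    mul_pow, Real.sin_sq_eq_half_sub, mul_div_cancel₀ θ two_ne_zero]
  ring

lemma angle_eq_two_mul_arcsin {a b : V} (ha : ‖a‖ = 1) (hb : ‖b‖ = 1) :
    InnerProductGeometry.angle a b = 2 * Real.arcsin (‖a - b‖ / 2) := by
  rw [norm_sub_eq_two_mul_sin_half_angle ha hb, mul_div_cancel_left₀ _ two_ne_zero,
    Real.arcsin_sin]
  · ring
  · linarith [InnerProductGeometry.angle_nonneg a b, Real.pi_pos]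
  · linarith [InnerProductGeometry.angle_le_pi a b]

lemma card_signChanges_inner (γ : ℝ → V) (N : ℕ) (v : V) :
    ((signChanges (fun t => ⟪v, γ t⟫) N).card : ℝ≥0∞) = ∑ i ∈ Finset.range N,
      (lune (γ ((i : ℝ) / N)) (γ (((i + 1 : ℕ) : ℝ) / N))).indicator 1 v := by
  simp only [signChanges, Finset.card_filter, lune, indicator_apply, mem_ofPred_eq, Pi.one_apply,
    Nat.cast_sum, Nat.cast_ite, Nat.cast_one, Nat.cast_zero]

variable [MeasurableSpace V] [BorelSpace V]

lemma measurable_card_signChanges_inner (γ : ℝ → V) (N : ℕ) :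
    Measurable fun v => ((signChanges (fun t => ⟪v, γ t⟫) N).card : ℝ≥0∞) := by
  simp only [card_signChanges_inner]
  exact Finset.measurable_fun_sum _ fun i _ =>
    measurable_one.indicator (isOpen_lune _ _).measurableSet

lemma lintegral_card_signChanges_inner (γ : ℝ → V) (N : ℕ) (μ : Measure V) :
    ∫⁻ v, (signChanges (fun t => ⟪v, γ t⟫) N).card ∂μ = ∑ i ∈ Finset.range N,
      μ (lune (γ ((i : ℝ) / N)) (γ (((i + 1 : ℕ) : ℝ) / N))) := by
  simp only [card_signChanges_inner]
  rw [lintegral_finsetSum _ fun i _ => measurable_one.indicator (isOpen_lune _ _).measurableSet]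
  simp only [lintegral_indicator_one (isOpen_lune _ _).measurableSet]

variable [FiniteDimensional ℝ V]

/-- The uniform probability measure on the unit ball. Its radial projection is the uniform measure
on the unit sphere, so that a `v` drawn from it is the normal of a uniformly random hyperplane. -/
def unitBallMeasure (V : Type*) [NormedAddCommGroup V] [InnerProductSpace ℝ V]
    [FiniteDimensional ℝ V] [MeasurableSpace V] [BorelSpace V] : Measure V :=
  ProbabilityTheory.cond volume (Metric.ball 0 1)

instance : IsProbabilityMeasure (unitBallMeasure V) :=
  ProbabilityTheory.cond_isProbabilityMeasure_of_finite
    (Metric.measure_ball_pos volume 0 one_pos).ne' measure_ball_lt_top.ne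

lemma unitBallMeasure_absolutelyContinuous : unitBallMeasure V ≪ volume :=
  ProbabilityTheory.cond_absolutelyContinuous

lemma measurePreserving_unitBallMeasure (R : V ≃ₗᵢ[ℝ] V) :
    MeasurePreserving R (unitBallMeasure V) (unitBallMeasure V) := by
  have hball : R ⁻¹' Metric.ball 0 1 = Metric.ball 0 1 := by simp
  have h := (R.measurePreserving.restrict_preimage
    (measurableSet_ball (x := (0 : V)) (ε := 1))).smul_measure (volume (Metric.ball (0 : V) 1))⁻¹
  rwa [hball] at h

lemma unitBallMeasure_lune_map (R : V ≃ₗᵢ[ℝ] V) (a b : V) :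
    unitBallMeasure V (lune (R a) (R b)) = unitBallMeasure V (lune a b) := by
  rw [← preimage_lune R a b, (measurePreserving_unitBallMeasure R).measure_preimage
    (isOpen_lune _ _).measurableSet.nullMeasurableSet]

/-- The two lunes are exchanged by the reflection that fixes `b` and maps `a` to `c`. -/
lemma unitBallMeasure_lune_eq_of_inner_eq {a b c : V} (hnorm : ‖a‖ = ‖c‖)
    (hinner : ⟪a, b⟫ = ⟪c, b⟫) :
    unitBallMeasure V (lune a b) = unitBallMeasure V (lune b c) := by
  set R := (ℝ ∙ (a - c))ᗮ.reflection
  have hRb : R b = b := Submodule.reflection_mem_subspace_eq_self <|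
    Submodule.mem_orthogonal_singleton_iff_inner_right.2 (by rw [inner_sub_left, hinner, sub_self])
  rw [← unitBallMeasure_lune_map R a b, Submodule.reflection_sub hnorm, hRb, lune_comm]

lemma unitBallMeasure_lune_slerp {a b : V} (ha : ‖a‖ = 1) (hb : ‖b‖ = 1) {θ : ℝ} (k : ℕ) :
    unitBallMeasure V (lune (slerp a b (k * θ)) (slerp a b ((k + 1 : ℕ) * θ))) =
      unitBallMeasure V (lune (slerp a b 0) (slerp a b θ)) := by
  induction k with
  | zero => simp
  | succ k ih =>
    rw [← ih]
    refine (unitBallMeasure_lune_eq_of_inner_eq (norm_slerp_eq_norm_slerp ha hb _ _) ?_).symm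
    rw [inner_slerp_slerp ha hb, inner_slerp_slerp ha hb, ← Real.cos_neg]
    congr 2
    push_cast
    ring

/-- The `m` copies of the lune obtained by rotating it by multiples of its angle fit into a half
turn, where they are disjoint. -/
lemma natCast_mul_unitBallMeasure_lune_le_one {a b : V} (ha : ‖a‖ = 1) (hb : ‖b‖ = 1)
    (hsin : Real.sin (InnerProductGeometry.angle a b) ≠ 0) {m : ℕ}
    (hm : m * InnerProductGeometry.angle a b ≤ π) : m * unitBallMeasure V (lune a b) ≤ 1 := by
  set θ := InnerProductGeometry.angle a b
  have hθ0 : 0 ≤ θ := InnerProductGeometry.angle_nonneg a b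
  have hlune : lune (slerp a b 0) (slerp a b θ) = lune a b := by
    rw [slerp_zero, slerp_angle, lune_smul_smul (mul_self_pos.2 hsin)]
  let W (k : ℕ) : Set V := lune (slerp a b (k * θ)) (slerp a b ((k + 1 : ℕ) * θ))
  have hdisj : Pairwise (Function.onFun Disjoint fun k : Fin m => W k) := by
    refine (pairwise_disjoint_on _).2 fun j k hjk => ?_
    have hmono {i l : ℕ} (h : i ≤ l) : (i : ℝ) * θ ≤ l * θ := by gcongr
    have hstart : 0 ≤ j * θ := by positivity
    have hend := (hmono k.isLt).trans hm
    exact disjoint_lune_slerp a b (hmono (Nat.le_succ _)) (hmono hjk) (hmono (Nat.le_succ _))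
      (by linarith)
  calc m * unitBallMeasure V (lune a b)
      = ∑ k : Fin m, unitBallMeasure V (W k) := by
        simp only [W, unitBallMeasure_lune_slerp ha hb, hlune, Finset.sum_const, Finset.card_univ,
          Fintype.card_fin, nsmul_eq_mul]
    _ = unitBallMeasure V (⋃ k : Fin m, W k) := by
      rw [measure_iUnion hdisj fun k => (isOpen_lune _ _).measurableSet, tsum_fintype]
    _ ≤ 1 := prob_le_one

/-! ### The Crofton inequality -/

lemma tendsto_floor_pi_div_mul_chord :
    Tendsto (fun x : ℝ => ⌊π / x⌋₊ * (2 * Real.sin (x / 2))) (𝓝[>] 0) (𝓝 π) := by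
  have hfloor : Tendsto (fun x : ℝ => (⌊π / x⌋₊ : ℝ) / (π / x)) (𝓝[>] 0) (𝓝 1) :=
    (tendsto_nat_floor_div_atTop (R := ℝ)).comp
      (tendsto_inv_nhdsGT_zero.const_mul_atTop Real.pi_pos)
  have hsinc : Tendsto (fun x : ℝ => π * Real.sinc (x / 2)) (𝓝[>] 0) (𝓝 π) := by
    have hcont : Continuous fun x : ℝ => π * Real.sinc (x / 2) := by fun_prop
    simpa using (hcont.tendsto 0).mono_left nhdsWithin_le_nhds
  have h := hfloor.mul hsinc
  rw [one_mul] at h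
  refine h.congr' ?_
  filter_upwards [self_mem_nhdsWithin] with x hx
  have hx0 : x ≠ 0 := (mem_Ioi.1 hx).ne'
  rw [Real.sinc_of_ne_zero (by positivity)]
  field_simp

lemma exists_forall_mul_unitBallMeasure_lune_le_edist {c : ℝ} (hc : c < π) :
    ∃ δ > 0, ∀ a b : V, ‖a‖ = 1 → ‖b‖ = 1 → dist a b < δ →
      ENNReal.ofReal c * unitBallMeasure V (lune a b) ≤ edist a b := by
  have hfloor : ∀ᶠ x : ℝ in 𝓝[>] 0, c < ⌊π / x⌋₊ * (2 * Real.sin (x / 2)) ∧ x < π :=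
    (tendsto_floor_pi_div_mul_chord.eventually_const_lt hc).and
      (nhdsWithin_le_nhds (gt_mem_nhds Real.pi_pos))
  obtain ⟨η, hη, hηc⟩ := mem_nhdsGT_iff_exists_Ioo_subset.1 hfloor
  have harcsin : ∀ᶠ d : ℝ in 𝓝 0, 2 * Real.arcsin (d / 2) < η :=
    (by fun_prop : Continuous fun d : ℝ => 2 * Real.arcsin (d / 2)).tendsto' 0 0 (by simp)
      |>.eventually_lt_const hη
  obtain ⟨δ, hδ, hball⟩ := Metric.eventually_nhds_iff.1 harcsin
  refine ⟨δ, hδ, fun a b ha hb hab => ?_⟩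
  rcases eq_or_ne a b with rfl | hne
  · simp [lune_self]
  set θ := InnerProductGeometry.angle a b
  have hθη : θ < η := (angle_eq_two_mul_arcsin ha hb).trans_lt <|
    hball (by simpa [dist_eq_norm] using hab)
  have hθ0 : 0 < θ := by
    refine (InnerProductGeometry.angle_nonneg a b).lt_of_ne' fun hθ => sub_ne_zero.2 hne ?_
    rw [← norm_eq_zero, norm_sub_eq_two_mul_sin_half_angle ha hb, hθ]
    simp
  obtain ⟨hcθ, hθpi⟩ := hηc ⟨hθ0, hθη⟩
  have hm : ⌊π / θ⌋₊ * θ ≤ π := (le_div_iff₀ hθ0).1 (Nat.floor_le (by positivity))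
  calc ENNReal.ofReal c * unitBallMeasure V (lune a b)
      ≤ ENNReal.ofReal (⌊π / θ⌋₊ * ‖a - b‖) * unitBallMeasure V (lune a b) := by
        rw [norm_sub_eq_two_mul_sin_half_angle ha hb]
        gcongr
    _ = (⌊π / θ⌋₊ * unitBallMeasure V (lune a b)) * edist a b := by
        rw [ENNReal.ofReal_mul (by positivity), ENNReal.ofReal_natCast, edist_dist, dist_eq_norm,
          mul_right_comm]
    _ ≤ edist a b := mul_le_of_le_one_left' <| natCast_mul_unitBallMeasure_lune_le_one ha hb
        (Real.sin_pos_of_pos_of_lt_pi hθ0 hθpi).ne' hm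

lemma eventually_mul_sum_unitBallMeasure_lune_le {γ : ℝ → V} (hγ : Continuous γ)
    (hunit : ∀ t, ‖γ t‖ = 1) {c : ℝ} (hc : c < π) :
    ∀ᶠ N : ℕ in atTop, ENNReal.ofReal c * ∑ i ∈ Finset.range N,
      unitBallMeasure V (lune (γ ((i : ℝ) / N)) (γ (((i + 1 : ℕ) : ℝ) / N))) ≤
        eVariationOn γ (Icc 0 1) := by
  obtain ⟨δ, hδ, hlune⟩ := exists_forall_mul_unitBallMeasure_lune_le_edist (V := V) hc
  obtain ⟨η, hη, hunif⟩ := Metric.uniformContinuousOn_iff.1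
    (isCompact_Icc.uniformContinuousOn_of_continuous hγ.continuousOn) δ hδ
  filter_upwards [(tendsto_one_div_atTop_nhds_zero_nat (𝕜 := ℝ)).eventually_lt_const hη,
    eventually_gt_atTop 0] with N hNη hN
  have hmono : Monotone fun i : ℕ => (i : ℝ) / N := fun _ _ h => by dsimp only; gcongr
  have hgrid (i : ℕ) (hi : i ≤ N) : (i : ℝ) / N ∈ Icc (0 : ℝ) 1 :=
    ⟨by positivity, div_le_one_of_le₀ (by exact_mod_cast hi) (by positivity)⟩
  rw [Finset.mul_sum]
  refine (Finset.sum_le_sum fun i hi => ?_).trans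
    (eVariationOn.sum_le_of_monotoneOn_Iic (hmono.monotoneOn _) hgrid)
  rw [Finset.mem_range] at hi
  rw [edist_comm]
  refine hlune _ _ (hunit _) (hunit _) (hunif _ (hgrid i hi.le) _ (hgrid (i + 1) hi) ?_)
  rwa [dist_comm, Real.dist_eq, ← sub_div, Nat.cast_succ, add_sub_cancel_left,
    abs_of_nonneg (by positivity)]

lemma ae_inner_ne_zero {a : V} (ha : a ≠ 0) : ∀ᵐ v : V, ⟪v, a⟫ ≠ 0 := by
  have hker : {v : V | ¬ ⟪v, a⟫ ≠ 0} = ((ℝ ∙ a)ᗮ : Submodule ℝ V) := by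
    ext v
    exact not_not.trans Submodule.mem_orthogonal_singleton_iff_inner_left.symm
  rw [ae_iff, hker]
  exact Measure.addHaar_submodule _ _ fun htop => ha (by simpa using htop)

/-- A nonzero linear functional has no local minimum, so these `v` are frontier points of the dual
cone of `A`, which is convex. -/
lemma volume_innerDual_inter_eq_zero {A : Set V} (hA : (0 : V) ∉ A) :
    volume {v : V | (∀ a ∈ A, 0 ≤ ⟪v, a⟫) ∧ ∃ a ∈ A, ⟪v, a⟫ = 0} = 0 := by
  refine measure_mono_null ?_ ((ProperCone.innerDual A).convex.addHaar_frontier volume)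
  rintro v ⟨hv, a, haA, hva⟩
  have hdual : v ∈ ProperCone.innerDual A := fun x hx => by
    simpa [real_inner_comm] using hv x hx
  refine ⟨subset_closure hdual, fun hinterior => hA ?_⟩
  have hmin : IsLocalMin (innerSL ℝ a) v := by
    filter_upwards [mem_interior_iff_mem_nhds.1 hinterior] with w hw
    simpa [real_inner_comm v a, hva] using hw haA
  have hzero := hmin.hasFDerivAt_eq_zero (innerSL ℝ a).hasFDerivAt
  rwa [← norm_eq_zero.1 ((innerSL_apply_norm ℝ a).symm.trans (norm_eq_zero.2 hzero))]

section CrossingLevel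

variable {X : Type*} [TopologicalSpace X] [SecondCountableTopology X] {K : X → V} {p : V}

/-- A local minimum is a minimum over some member of a countable basis. -/
lemma ae_not_isLocalMin_inner (hp : p ∉ range K) :
    ∀ᵐ v : V, ∀ z, ⟪v, K z⟫ = ⟪v, p⟫ → ¬ IsLocalMin (fun x => ⟪v, K x⟫) z := by
  have hbasis : ∀ U ∈ TopologicalSpace.countableBasis X, ∀ᵐ v : V,
      ¬((∀ a ∈ (K · - p) '' U, 0 ≤ ⟪v, a⟫) ∧ ∃ a ∈ (K · - p) '' U, ⟪v, a⟫ = 0) := by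
    intro U _
    rw [ae_iff]
    simp only [not_not]
    refine volume_innerDual_inter_eq_zero ?_
    rintro ⟨x, -, hx⟩
    exact hp ⟨x, sub_eq_zero.1 hx⟩
  filter_upwards [(ae_ball_iff (TopologicalSpace.countable_countableBasis X)).2 hbasis]
    with v hv z hz hmin
  obtain ⟨U, hU, hzU, hsub⟩ :=
    (TopologicalSpace.isBasis_countableBasis X).mem_nhds_iff.1 hmin
  refine hv U hU ⟨?_, K z - p, mem_image_of_mem _ hzU, by rw [inner_sub_right, hz, sub_self]⟩
  rintro _ ⟨x, hx, rfl⟩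
  rw [inner_sub_right, ← hz, sub_nonneg]
  exact hsub hx

lemma ae_isCrossingLevel_inner (hp : p ∉ range K) :
    ∀ᵐ v : V, IsCrossingLevel (fun x => ⟪v, K x⟫) ⟪v, p⟫ := by
  have hneg : -p ∉ range (-K) := by simpa using hp
  filter_upwards [ae_not_isLocalMin_inner hp, ae_not_isLocalMin_inner hneg]
    with v hmin hmax z hz hextr
  refine hextr.elim (hmin z hz) fun hmaxz => hmax z (by simpa using hz) ?_
  simpa using hmaxz.neg

end CrossingLevel

lemma ofReal_mul_lintegral_encard_le_eVariationOn {γ : ℝ → V} (hγ : Continuous γ)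
    (hunit : ∀ t, ‖γ t‖ = 1) {c : ℝ} (hc0 : 0 < c) (hc : c < π) :
    ENNReal.ofReal c *
      ∫⁻ v, (({t | ⟪v, γ t⟫ = 0} ∩ Ioo (0 : ℝ) 1).encard : ℝ≥0∞) ∂(unitBallMeasure V) ≤
        eVariationOn γ (Icc 0 1) := by
  have hγ0 (t : ℝ) : γ t ≠ 0 := norm_ne_zero_iff.1 (by rw [hunit]; exact one_ne_zero)
  have hgeneric : ∀ᵐ v : V, (∀ q : ℚ, ⟪v, γ q⟫ ≠ 0) ∧ IsCrossingLevel (fun t => ⟪v, γ t⟫) 0 := by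
    have hcross := ae_isCrossingLevel_inner (K := γ) (p := 0) (by simpa using hγ0)
    simp only [inner_zero_right] at hcross
    exact (ae_all_iff.2 fun q : ℚ => ae_inner_ne_zero (hγ0 q)).and hcross
  have hfatou : ∫⁻ v, (({t | ⟪v, γ t⟫ = 0} ∩ Ioo (0 : ℝ) 1).encard : ℝ≥0∞) ∂(unitBallMeasure V) ≤
      liminf (fun N => ∫⁻ v, (signChanges (fun t => ⟪v, γ t⟫) N).card ∂(unitBallMeasure V))
        atTop := by
    refine (lintegral_mono_ae ?_).trans
      (lintegral_liminf_le (measurable_card_signChanges_inner γ))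
    filter_upwards [unitBallMeasure_absolutelyContinuous.ae_le hgeneric] with v hv
    exact encard_le_liminf_card_signChanges (by fun_prop) hv.1 hv.2
  have hc_ne : ENNReal.ofReal c ≠ 0 := (ENNReal.ofReal_pos.2 hc0).ne'
  rw [mul_comm, ← ENNReal.le_div_iff_mul_le (.inl hc_ne) (.inl ENNReal.ofReal_ne_top)]
  refine hfatou.trans (liminf_le_of_frequently_le' (Eventually.frequently ?_))
  filter_upwards [eventually_mul_sum_unitBallMeasure_lune_le hγ hunit hc] with N hN
  rwa [ENNReal.le_div_iff_mul_le (.inl hc_ne) (.inl ENNReal.ofReal_ne_top), mul_comm,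
    lintegral_card_signChanges_inner]

lemma pi_mul_lintegral_encard_le_eVariationOn {γ : ℝ → V} (hγ : Continuous γ)
    (hunit : ∀ t, ‖γ t‖ = 1) :
    ENNReal.ofReal π *
      ∫⁻ v, (({t | ⟪v, γ t⟫ = 0} ∩ Ioo (0 : ℝ) 1).encard : ℝ≥0∞) ∂(unitBallMeasure V) ≤
        eVariationOn γ (Icc 0 1) := by
  have hlim : Tendsto ENNReal.ofReal (𝓝[<] π) (𝓝 (ENNReal.ofReal π)) :=
    (ENNReal.continuous_ofReal.tendsto π).mono_left nhdsWithin_le_nhds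
  refine le_of_tendsto (ENNReal.Tendsto.mul_const hlim
    (.inl (ENNReal.ofReal_pos.2 Real.pi_pos).ne')) ?_
  filter_upwards [Ioo_mem_nhdsLT Real.pi_pos] with c hc
  exact ofReal_mul_lintegral_encard_le_eVariationOn hγ hunit hc.1 hc.2

/-! ### The cone angle -/

lemma ae_le_encard_of_mem_hull {n : ℕ} {K : ℝ → V} (hK : Continuous K) {p : V}
    (hp : p ∈ hull K n) (hpK : p ∉ range K) :
    ∀ᵐ v : V, ((2 * n : ℕ) : ℕ∞) ≤ ({t | ⟪v, K t⟫ = ⟪v, p⟫} ∩ Ioo (0 : ℝ) 1).encard := by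
  have hK0 : K 0 - p ≠ 0 := sub_ne_zero.2 fun h => hpK ⟨0, h⟩
  filter_upwards [ae_isCrossingLevel_inner hpK, ae_inner_ne_zero hK0] with v hcross hv
  have hv0 : innerSL ℝ v ≠ 0 := fun h => hv (by simpa using DFunLike.congr_fun h (K 0 - p))
  exact (hp (innerSL ℝ v) hv0).le_encard hK hcross
    fun h => hv (by rw [inner_sub_right]; exact sub_eq_zero.2 h)

end RandomHyperplane

lemma inner_inv_norm_smul_sub_eq_zero_iff {V : Type*} [NormedAddCommGroup V]
    [InnerProductSpace ℝ V] {x p : V} (hx : x ≠ p) (v : V) :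
    ⟪v, ‖x - p‖⁻¹ • (x - p)⟫ = 0 ↔ ⟪v, x⟫ = ⟪v, p⟫ := by
  have hnorm : ‖x - p‖⁻¹ ≠ 0 := inv_ne_zero (norm_ne_zero_iff.2 (sub_ne_zero.2 hx))
  rw [real_inner_smul_right, mul_eq_zero_iff_left hnorm, inner_sub_right, sub_eq_zero]

theorem coneAngle_ge_of_mem_hull_general {V : Type*} [NormedAddCommGroup V]
    [InnerProductSpace ℝ V] [FiniteDimensional ℝ V] (n : ℕ) (K : ℝ → V) (hK : Continuous K) (p : V)
    (hp : p ∈ hull K n) (hpK : p ∉ Set.range K) :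
    ENNReal.ofReal (2 * Real.pi * n) ≤
      eVariationOn (fun t => ‖K t - p‖⁻¹ • (K t - p)) (Icc (0 : ℝ) 1) := by
  borelize V
  have hne (t : ℝ) : K t ≠ p := fun h => hpK ⟨t, h⟩
  set γ : ℝ → V := fun t => ‖K t - p‖⁻¹ • (K t - p)
  have hγ : Continuous γ :=
    (Continuous.inv₀ (by fun_prop) fun t => norm_ne_zero_iff.2 (sub_ne_zero.2 (hne t))).smul
      (by fun_prop)
  have hunit (t : ℝ) : ‖γ t‖ = 1 := norm_smul_inv_norm (𝕜 := ℝ) (sub_ne_zero.2 (hne t))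
  have hcount : ∀ᵐ v ∂(unitBallMeasure V),
      ((2 * n : ℕ) : ℝ≥0∞) ≤ ({t | ⟪v, γ t⟫ = 0} ∩ Ioo (0 : ℝ) 1).encard := by
    filter_upwards [unitBallMeasure_absolutelyContinuous.ae_le
      (ae_le_encard_of_mem_hull hK hp hpK)] with v hv
    simp only [γ, inner_inv_norm_smul_sub_eq_zero_iff (hne _)]
    exact_mod_cast hv
  calc ENNReal.ofReal (2 * π * n)
      = ENNReal.ofReal π * ∫⁻ _, ((2 * n : ℕ) : ℝ≥0∞) ∂(unitBallMeasure V) := by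
        rw [lintegral_const, measure_univ, mul_one, ← ENNReal.ofReal_natCast,
          ← ENNReal.ofReal_mul Real.pi_pos.le]
        push_cast
        ring_nf
    _ ≤ ENNReal.ofReal π *
          ∫⁻ v, (({t | ⟪v, γ t⟫ = 0} ∩ Ioo (0 : ℝ) 1).encard : ℝ≥0∞) ∂(unitBallMeasure V) :=
        mul_le_mul' le_rfl (lintegral_mono_ae hcount)
    _ ≤ eVariationOn γ (Icc 0 1) := pi_mul_lintegral_encard_le_eVariationOn hγ hunit

/-- If `p` lies in the `n`-th hull of a closed rectifiable curve
`K` in `ℝ³` and `p ∉ K`, then the cone angle of `K` at `p`, i.e. the length of the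
radial projection of `K` to the unit sphere about `p`, is at least `2πn`. -/
theorem coneAngle_ge_of_mem_hull (n : ℕ)
    (K : ℝ → EuclideanSpace ℝ (Fin 3))
    (hK : Continuous K) (hper : Function.Periodic K 1)
    (hrect : eVariationOn K (Icc (0 : ℝ) 1) ≠ ⊤)
    (p : EuclideanSpace ℝ (Fin 3)) (hp : p ∈ hull K n) (hpK : p ∉ Set.range K) :
    ENNReal.ofReal (2 * Real.pi * n) ≤
      eVariationOn (fun t => ‖K t - p‖⁻¹ • (K t - p)) (Icc (0 : ℝ) 1) :=
  coneAngle_ge_of_mem_hull_general n K hK p hp hpK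
end
end
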